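/- arXiv:math/0609634 — 3 statements merged into one kernel-verified Lean document; each statement's English description precedes it below -/
import Mathlib

section
/- For every natural number k there exists an abelian group G such that: the cardinality of G equals ℶ_{k+1}; G is ℵ_{k+1}-free; and the only group homomorphism from G to the additive group of integers ℤ is the zero homomorphism (i.e. Hom(G, ℤ) = {0}). -/
open Cardinal

theorem tri_li {ι M W : Type*} [LinearOrder W] [AddCommGroup M] (f : ι → M) (rk : ι → W)
    (φ : ι → M →+ ℚ) (h0 : ∀ i j, i ≠ j → rk i ≤ rk j → φ j (f i) = 0)
    (h1 : ∀ j, φ j (f j) ≠ 0) : LinearIndependent ℤ f := by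
  rw [linearIndependent_iff]
  intro l hl
  by_contra hne
  obtain ⟨j, hj, hmax⟩ := Finset.exists_max_image l.support rk (Finsupp.support_nonempty_iff.2 hne)
  have := congrArg (φ j) hl
  rw [Finsupp.linearCombination_apply, Finsupp.sum, map_sum, map_zero,
    Finset.sum_eq_single_of_mem j hj] at this
  · rw [map_zsmul] at this
    have h2 := h1 j
    simp only [zsmul_eq_mul, mul_eq_zero, Int.cast_eq_zero] at this
    rcases this with h | h
    · exact (Finsupp.mem_support_iff.1 hj) h
    · exact h2 h
  · intro i hi hij
    rw [map_zsmul, h0 i j hij (hmax i hi), smul_zero]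

theorem free_sub {I : Type*} (N : Submodule ℤ (I →₀ ℤ)) : Module.Free ℤ N := by
  classical
  let _ : LinearOrder I := linearOrderOfSTO (WellOrderingRel (α := I))
  have : WellFoundedLT I := inferInstanceAs (IsWellFounded I WellOrderingRel)
  let J : I → Submodule ℤ ℤ := fun i =>
    (N ⊓ Finsupp.supported ℤ ℤ (Set.Iic i)).map (Finsupp.lapply i)
  have hJ : ∀ i, ∃ x : I →₀ ℤ, x ∈ N ∧ x ∈ Finsupp.supported ℤ ℤ (Set.Iic i) ∧
      ∀ z ∈ N, z ∈ Finsupp.supported ℤ ℤ (Set.Iic i) → x i ∣ z i := by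
    intro i
    obtain ⟨d, hd⟩ := (IsPrincipalIdealRing.principal (J i)).principal
    have : d ∈ J i := by rw [hd]; exact Submodule.mem_span_singleton_self d
    obtain ⟨x, ⟨hx1, hx2⟩, hx3⟩ := this
    refine ⟨x, hx1, hx2, fun z hz1 hz2 => ?_⟩
    have : z i ∈ J i := ⟨z, ⟨hz1, hz2⟩, rfl⟩
    rw [hd, Submodule.mem_span_singleton] at this
    obtain ⟨a, ha⟩ := this
    refine ⟨a, ?_⟩
    have hx4 : x i = d := hx3
    rw [hx4, ← ha, smul_eq_mul, mul_comm]
  choose x hxN hxs hxd using hJ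
  let ι := {i : I // x i i ≠ 0}
  let f : ι → N := fun i => ⟨x i, hxN i⟩
  have hli : LinearIndependent ℤ f := by
    refine tri_li f (fun i => i.1)
      (fun j => (Int.castAddHom ℚ).comp ((Finsupp.applyAddHom j.1).comp N.subtype.toAddMonoidHom)) ?_ ?_
    · intro i j hij hle
      have hlt : i.1 < j.1 := lt_of_le_of_ne hle (fun h => hij (Subtype.ext h))
      have : (x i.1) j.1 = 0 := by
        by_contra hne
        have := (Finsupp.mem_supported ℤ _).1 (hxs i.1) (Finsupp.mem_support_iff.2 hne)
        exact absurd hlt (not_lt.2 this)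
      simpa [f] using this
    · intro j
      simpa [f] using j.2
  have hsp : ∀ i : I, ∀ z (hz : z ∈ N), z ∈ Finsupp.supported ℤ ℤ (Set.Iic i) →
      (⟨z, hz⟩ : N) ∈ Submodule.span ℤ (Set.range f) := by
    intro i
    induction i using WellFoundedLT.induction with
    | ind i ih =>
      intro z hz hzs
      obtain ⟨a, ha⟩ := hxd i z hz hzs
      set z' := z - a • x i with hz'
      have hz'N : z' ∈ N := N.sub_mem hz (N.smul_mem a (hxN i))
      have hz's : z' ∈ Finsupp.supported ℤ ℤ (Set.Iic i) :=
        Submodule.sub_mem _ hzs (Submodule.smul_mem _ a (hxs i))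
      have hz'i : z' i = 0 := by simp [hz', ha, mul_comm]
      have h1 : (⟨z', hz'N⟩ : N) ∈ Submodule.span ℤ (Set.range f) := by
        by_cases h0 : z' = 0
        · have : (⟨z', hz'N⟩ : N) = 0 := Subtype.ext h0
          rw [this]; exact Submodule.zero_mem _
        · obtain ⟨j, hj, hmax⟩ := Finset.exists_max_image z'.support id
            (Finsupp.support_nonempty_iff.2 h0)
          have hji : j ≤ i := (Finsupp.mem_supported ℤ _).1 hz's hj
          have hne : j ≠ i := by
            rintro rfl
            exact (Finsupp.mem_support_iff.1 hj) hz'i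
          refine ih j (lt_of_le_of_ne hji hne) z' hz'N ?_
          rw [Finsupp.mem_supported]
          intro t ht
          exact hmax t ht
      have h2 : (⟨a • x i, N.smul_mem a (hxN i)⟩ : N) ∈ Submodule.span ℤ (Set.range f) := by
        by_cases h0 : x i i = 0
        · -- then z = z'
          have hx : (⟨x i, hxN i⟩ : N) ∈ Submodule.span ℤ (Set.range f) := by
            by_cases h0' : x i = 0
            · have : (⟨x i, hxN i⟩ : N) = 0 := Subtype.ext h0'
              rw [this]; exact Submodule.zero_mem _
            · obtain ⟨j, hj, hmax⟩ := Finset.exists_max_image (x i).support id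
                (Finsupp.support_nonempty_iff.2 h0')
              have hji : j ≤ i := (Finsupp.mem_supported ℤ _).1 (hxs i) hj
              have hne : j ≠ i := by
                rintro rfl
                exact (Finsupp.mem_support_iff.1 hj) h0
              refine ih j (lt_of_le_of_ne hji hne) _ (hxN i) ?_
              rw [Finsupp.mem_supported]
              intro t ht
              exact hmax t ht
          exact Submodule.smul_mem _ a hx
        · have hx : (⟨x i, hxN i⟩ : N) ∈ Submodule.span ℤ (Set.range f) :=
            Submodule.subset_span ⟨⟨i, h0⟩, rfl⟩
          exact Submodule.smul_mem _ a hx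
      have : (⟨z, hz⟩ : N) = ⟨z', hz'N⟩ + ⟨a • x i, N.smul_mem a (hxN i)⟩ := by
        apply Subtype.ext
        simp [hz']
      rw [this]
      exact Submodule.add_mem _ h1 h2
  refine Module.Free.of_basis (Module.Basis.mk hli ?_)
  rintro ⟨z, hz⟩ -
  by_cases h0 : z = 0
  · have : (⟨z, hz⟩ : N) = 0 := Subtype.ext h0
    rw [this]; exact Submodule.zero_mem _
  · obtain ⟨j, hj, hmax⟩ := Finset.exists_max_image z.support id
      (Finsupp.support_nonempty_iff.2 h0)
    refine hsp j z hz ?_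
    rw [Finsupp.mem_supported]
    intro t ht
    exact hmax t ht

theorem free_of_inj {H M : Type*} [AddCommGroup H] [AddCommGroup M] [Module.Free ℤ M]
    (g : H →ₗ[ℤ] M) (hg : Function.Injective g) : Module.Free ℤ H := by
  let b := Module.Free.chooseBasis ℤ M
  let g' : H →ₗ[ℤ] (_ →₀ ℤ) := b.repr.toLinearMap.comp g
  have hg' : Function.Injective g' := b.repr.injective.comp hg
  have := free_sub (LinearMap.range g')
  exact Module.Free.of_equiv (LinearEquiv.ofInjective g' hg').symm

theorem lexOrdinal {α : Type} (f g : α → Ordinal.{0}) : ∃ h : α → Ordinal.{0}, ∀ a b,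
    (h a < h b ↔ f a < f b ∨ (f a = f b ∧ g a < g b)) := by
  obtain ⟨K, hK⟩ : ∃ K, ∀ a, g a < K := by
    obtain ⟨B, hB⟩ := Ordinal.bddAbove_of_small (s := Set.range g)
    exact ⟨Order.succ B, fun a => Order.lt_succ_of_le (hB ⟨a, rfl⟩)⟩
  have key : ∀ a b, f a < f b → K * f a + g a < K * f b + g b := by
    intro a b h
    calc K * f a + g a < K * f a + K := by gcongr; exact hK a
      _ = K * (Order.succ (f a)) := by rw [Ordinal.mul_succ]
      _ ≤ K * f b := by gcongr; exact Order.succ_le_of_lt h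
      _ ≤ _ := le_self_add
  refine ⟨fun a => K * f a + g a, fun a b => ?_⟩
  rcases lt_trichotomy (f a) (f b) with h | h | h
  · simp [h, key a b h]
  · simp [h]
  · have := key b a h
    simp [h.not_gt, h.ne', this.le]

theorem choose_a (c : ℕ → ℤ) : ∃ a : ℕ → ℤ, ∀ z b : ℤ, z ≠ 0 →
    ¬ ∀ n, (2:ℤ) ^ n ∣ b - ∑ i ∈ Finset.range n, 2 ^ i * (a i * z + c i) := by
  by_contra hcon
  push Not at hcon
  choose z b hz hd using fun s : ℕ → Bool => hcon (fun i => if s i then 1 else 0)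
  have hni : ¬ Function.Injective (fun s => (z s, b s)) := by
    intro hinj
    have h1 : #(ℕ → Bool) = 2 ^ ℵ₀ := by simp
    have h2 := Cardinal.mk_le_aleph0_iff.2 hinj.countable
    rw [h1] at h2
    exact absurd h2 (not_le.2 (Cardinal.cantor ℵ₀))
  simp only [Function.Injective, not_forall] at hni
  obtain ⟨s, t, hst, hne⟩ := hni
  simp only [Prod.mk.injEq] at hst
  obtain ⟨hz', hb'⟩ := hst
  have hex : ∃ i, s i ≠ t i := by
    by_contra h; push Not at h; exact hne (funext h)
  classical
  let i0 := Nat.find hex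
  have hi0 : s i0 ≠ t i0 := Nat.find_spec hex
  have hlt : ∀ i < i0, s i = t i := fun i hi => by
    by_contra h; exact Nat.find_min hex hi h
  let d : ℕ → ℤ := fun i => (if s i then 1 else 0) - (if t i then 1 else 0)
  have hodd : ∀ n, ∃ q : ℤ, ∑ i ∈ Finset.range (i0 + 1 + n), 2 ^ i * d i = 2 ^ i0 * (2 * q + 1) := by
    intro n
    induction n with
    | zero =>
      rw [add_zero, Finset.sum_range_succ, Finset.sum_eq_zero]
      · rcases hs : s i0 <;> rcases ht : t i0 <;> simp_all [d]
        · exact ⟨-1, by ring⟩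
      · intro i hi
        simp [d, hlt i (Finset.mem_range.1 hi)]
    | succ n ih =>
      obtain ⟨q, hq⟩ := ih
      rw [← add_assoc, Finset.sum_range_succ, hq]
      exact ⟨q + 2 ^ n * d (i0 + 1 + n), by ring⟩
  have hdv : ∀ n, (2:ℤ) ^ n ∣ z s := by
    intro n
    obtain ⟨q, hq⟩ := hodd n
    have h1 := hd s (i0 + 1 + n)
    have h2 := hd t (i0 + 1 + n)
    rw [← hz', ← hb'] at h2
    have h3 := dvd_sub h2 h1
    have h4 : (b s - ∑ i ∈ Finset.range (i0 + 1 + n), 2 ^ i * ((if t i then 1 else 0) * z s + c i))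
      - (b s - ∑ i ∈ Finset.range (i0 + 1 + n), 2 ^ i * ((if s i then 1 else 0) * z s + c i))
      = (∑ i ∈ Finset.range (i0 + 1 + n), 2 ^ i * d i) * z s := by
      rw [Finset.sum_mul, sub_sub_sub_cancel_left, ← Finset.sum_sub_distrib]
      refine Finset.sum_congr rfl fun i _ => ?_
      simp only [d]; ring
    rw [h4, hq, mul_assoc, show i0 + 1 + n = i0 + (1 + n) by ring, pow_add] at h3
    have h5 := (mul_dvd_mul_iff_left (by positivity)).1 h3
    have h6 : IsCoprime ((2:ℤ) ^ (1 + n)) (2 * q + 1) := by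
      apply IsCoprime.pow_left
      exact ⟨-q, 1, by ring⟩
    exact (pow_dvd_pow 2 (by omega)).trans (h6.dvd_of_dvd_mul_left h5)
  refine hz s ?_
  apply Int.eq_zero_of_abs_lt_dvd (hdv (z s).natAbs)
  rw [Int.abs_eq_natAbs]
  exact_mod_cast Nat.lt_two_pow_self

def trn {k : ℕ} {A : Fin (k+1) → Type} [∀ i, Inhabited (A i)] (m : Fin (k+1)) (n : ℕ)
    (η : ∀ i, ℕ → A i) : Fin (k+1) × ℕ × (∀ i, ℕ → A i) :=
  (m, n, Function.update η m (fun i => if i < n then η m i else default))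

theorem trn_eq {k : ℕ} {A : Fin (k+1) → Type} [∀ i, Inhabited (A i)] {m m' : Fin (k+1)} {n n' : ℕ}
    {η ν : ∀ i, ℕ → A i} (h : trn m n η = trn m' n' ν) : m = m' ∧ n = n' :=
  ⟨congrArg (fun x => x.1) h, congrArg (fun x => x.2.1) h⟩

theorem trn_eq' {k : ℕ} {A : Fin (k+1) → Type} [∀ i, Inhabited (A i)] {m : Fin (k+1)} {n : ℕ}
    {η ν : ∀ i, ℕ → A i} (h : trn m n η = trn m n ν) :
    (∀ j, j ≠ m → η j = ν j) ∧ ∀ i < n, η m i = ν m i := by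
  have h' : Function.update η m (fun i => if i < n then η m i else default) =
    Function.update ν m (fun i => if i < n then ν m i else default) := congrArg (fun x => x.2.2) h
  constructor
  · intro j hj
    simpa [hj] using congrFun h' j
  · intro i hi
    simpa [hi] using congrFun (congrFun h' m) i

theorem comb {k : ℕ} {A : Fin (k+1) → Type} [∀ i, Inhabited (A i)] (j : ℕ) :
    ∀ (U : Set (∀ i, ℕ → A i)) (u : (∀ i, ℕ → A i) → Finset (Fin (k+1))),
      #U ≤ aleph j → (∀ η ∈ U, j + 1 ≤ (u η).card) →
      ∃ ρ : (∀ i, ℕ → A i) → Ordinal.{0}, Set.InjOn ρ U ∧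
        ∀ η ∈ U, ∃ m ∈ u η, ∃ n0, ∀ ν ∈ U, ρ ν < ρ η → ∀ n ≥ n0, trn m n ν ≠ trn m n η := by
  classical
  induction j with
  | zero =>
    intro U u hU hu
    have hc : U.Countable := by
      simpa [Cardinal.le_aleph0_iff_set_countable] using hU
    obtain ⟨f, hf⟩ := Set.countable_iff_exists_injOn.1 hc
    refine ⟨fun η => (f η : Ordinal), fun a ha b hb hab => hf ha hb (by simpa using hab), ?_⟩
    intro η hη
    obtain ⟨m, hm⟩ : (u η).Nonempty := Finset.card_pos.1 (by have := hu η hη; omega)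
    refine ⟨m, hm, ?_⟩
    have hsep : ∀ ν : (∀ i, ℕ → A i), ∃ N, ν ≠ η → ∀ n ≥ N, trn m n ν ≠ trn m n η := by
      intro ν
      by_contra hcon
      push Not at hcon
      refine (hcon 0).1 ?_
      funext i
      by_cases him : i = m
      · subst him
        funext t
        obtain ⟨-, n, hn, he⟩ := hcon (t+1)
        exact (trn_eq' he).2 t (by omega)
      · obtain ⟨-, n, hn, he⟩ := hcon 0
        exact (trn_eq' he).1 i him
    choose N hN using hsep
    have hfin : {ν ∈ U | f ν < f η}.Finite := by
      refine Set.Finite.of_finite_image (f := f) ?_ (hf.mono (fun x hx => hx.1))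
      refine (Set.finite_Iio (f η)).subset ?_
      rintro _ ⟨x, hx, rfl⟩
      exact hx.2
    refine ⟨hfin.toFinset.sup N, fun ν hν hlt n hn => ?_⟩
    have hlt' : f ν < f η := by simpa using hlt
    refine hN ν ?_ n (le_trans ?_ hn)
    · rintro rfl; exact lt_irrefl _ hlt'
    · exact Finset.le_sup (f := N) (by simp [hν, hlt'])
  | succ j ih =>
    intro U u hU hu
    let C : Set (Σ i, ℕ → A i) := ⋃ i, (fun η : (∀ i, ℕ → A i) => (⟨i, η i⟩ : Σ i, ℕ → A i)) '' U
    have hC : #C ≤ aleph (j+1 : ℕ) := by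
      refine (mk_iUnion_le _).trans ?_
      refine (mul_le_of_le (c := aleph (j+1 : ℕ)) (aleph0_le_aleph _) ?_ ?_)
      · exact (mk_le_aleph0).trans (aleph0_le_aleph _)
      · exact ciSup_le' fun i => mk_image_le.trans hU
    obtain ⟨o, hoC, ho⟩ : ∃ o : (Σ i, ℕ → A i) → Ordinal.{0}, Set.InjOn o C ∧
        ∀ c ∈ C, o c < Ordinal.omega (j+1 : ℕ) := by
      have h1 : #C ≤ #((Ordinal.omega (j+1 : ℕ)).ToType) := by
        rw [mk_toType, Ordinal.card_omega]; exact hC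
      obtain ⟨g⟩ := h1
      refine ⟨fun c => if h : c ∈ C then
        (Ordinal.typein (α := (Ordinal.omega (j+1 : ℕ)).ToType) (· < ·) (g ⟨c, h⟩)) else 0, ?_, ?_⟩
      · intro a ha b hb hab
        simp only [ha, hb, dif_pos] at hab
        have := g.injective (Ordinal.typein_injective _ hab)
        exact congrArg Subtype.val this
      · intro c hc
        simp only [hc, dif_pos]
        exact Ordinal.typein_lt_self _
    have hmax : ∀ η : (∀ i, ℕ → A i), ∃ m, ∀ i, o ⟨i, η i⟩ ≤ o ⟨m, η m⟩ := by
      intro η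
      obtain ⟨m, -, hm⟩ := Finset.exists_max_image Finset.univ (fun i => o ⟨i, η i⟩)
        Finset.univ_nonempty
      exact ⟨m, fun i => hm i (Finset.mem_univ _)⟩
    choose mx hmx using hmax
    let r1 : (∀ i, ℕ → A i) → Ordinal.{0} := fun η => o ⟨mx η, η (mx η)⟩
    have hmemC : ∀ η ∈ U, ∀ i, (⟨i, η i⟩ : Σ i, ℕ → A i) ∈ C := fun η hη i =>
      Set.mem_iUnion.2 ⟨i, η, hη, rfl⟩
    have hfib : ∀ c, ∃ ρ : (∀ i, ℕ → A i) → Ordinal.{0}, Set.InjOn ρ {η ∈ U | r1 η = c} ∧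
        ∀ η ∈ {η ∈ U | r1 η = c}, ∃ m ∈ (u η).erase (mx η), ∃ n0, ∀ ν ∈ {η ∈ U | r1 η = c},
          ρ ν < ρ η → ∀ n ≥ n0, trn m n ν ≠ trn m n η := by
      intro c
      refine ih _ (fun η => (u η).erase (mx η)) ?_ ?_
      · by_cases hc : c < Ordinal.omega (j+1 : ℕ)
        · have hcard : #(Set.Iio (Order.succ c)) ≤ Cardinal.lift.{1,0} (aleph.{0} (j : Ordinal.{0})) := by
            rw [Cardinal.mk_Iio_ordinal, Cardinal.lift_le]
            have h1 : Order.succ c < Ordinal.omega (j+1 : ℕ) :=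
              (isSuccLimit_omega _).succ_lt hc
            rw [← Cardinal.ord_aleph, Cardinal.lt_ord] at h1
            have h2 : aleph (j+1 : ℕ) = Order.succ (aleph j) := by
              rw [Cardinal.succ_aleph]; simp
            rw [h2] at h1
            exact Order.le_of_lt_succ h1
          let e : {η ∈ U | r1 η = c} → (Fin (k+1) → Set.Iio (Order.succ c)) := fun η i =>
            ⟨o ⟨i, η.1 i⟩, Order.lt_succ_of_le ((hmx η.1 i).trans_eq η.2.2)⟩
          have he : Function.Injective e := by
            intro a b hab
            apply Subtype.ext
            funext i
            have h1 : o ⟨i, a.1 i⟩ = o ⟨i, b.1 i⟩ := congrArg Subtype.val (congrFun hab i)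
            have h2 := hoC (hmemC a.1 a.2.1 i) (hmemC b.1 b.2.1 i) h1
            simpa using h2
          have h3 := Cardinal.mk_le_of_injective (f := e ∘ ULift.down.{1,0})
            (he.comp ULift.down_injective)
          rw [Cardinal.mk_uLift.{0,1}] at h3
          rw [← Cardinal.lift_le.{1,0}]
          refine h3.trans ?_
          rw [Cardinal.mk_pi, Cardinal.prod_const]
          simp only [Cardinal.lift_id, Cardinal.mk_fin, Cardinal.lift_uzero, Cardinal.lift_natCast]
          refine (Cardinal.power_le_power_right hcard).trans ?_
          exact Cardinal.power_nat_le (by simp)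
        · have : {η ∈ U | r1 η = c} = ∅ := by
            ext η
            simp only [Set.mem_ofPred_eq, Set.mem_empty_iff_false, iff_false, not_and]
            rintro hη rfl
            exact hc (ho _ (hmemC η hη _))
          rw [this]; simp
      · intro η hη
        have := hu η hη.1
        have := Finset.pred_card_le_card_erase (s := u η) (a := mx η)
        omega
    choose r2 hr2 hr2' using hfib
    obtain ⟨h, hh⟩ := lexOrdinal r1 (fun η => r2 (r1 η) η)
    refine ⟨h, ?_, ?_⟩
    · intro a ha b hb hab
      have h1 : ¬ h a < h b := by simp [hab]
      have h2 : ¬ h b < h a := by simp [hab]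
      rw [hh] at h1 h2
      push Not at h1 h2
      have h3 : r1 a = r1 b := le_antisymm h2.1 h1.1
      refine hr2 (r1 b) ⟨ha, h3⟩ ⟨hb, rfl⟩ ?_
      have h4 := h1.2 h3
      have h5 := h2.2 h3.symm
      rw [h3] at h4 h5
      exact le_antisymm h5 h4
    · intro η hη
      obtain ⟨m, hm, n0, hn0⟩ := hr2' (r1 η) η ⟨hη, rfl⟩
      refine ⟨m, Finset.mem_of_mem_erase hm, n0, fun ν hν hlt n hn heq => ?_⟩
      rw [hh] at hlt
      rcases hlt with hlt | ⟨he, hlt⟩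
      · have h1 := (trn_eq' heq).1 (mx η) (Finset.ne_of_mem_erase hm).symm
        have h2 := hmx ν (mx η)
        rw [h1] at h2
        exact absurd hlt (not_lt.2 h2)
      · rw [he] at hlt
        exact hn0 ν ⟨hν, he⟩ hlt n hn heq

theorem blackbox {k : ℕ} {A : Fin (k+1) → Type} [∀ i, Inhabited (A i)]
    (σ : ∀ m : Fin (k+1), ((∀ i : Fin (k+1), i < m → ℕ → A i) → ℤ) → A m)
    (F : Fin (k+1) × ℕ × (∀ i, ℕ → A i) → ℤ) :
    ∃ η : ∀ i, ℕ → A i, ∀ m n, ∃ g : (∀ i : Fin (k+1), i < m → ℕ → A i) → ℤ,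
      η m n = σ m g ∧ F (trn m n η) = g (fun i _ => η i) := by
  classical
  let r : Fin (k+1) × ℕ → Fin (k+1) × ℕ → Prop := Prod.Lex (· > ·) (· < ·)
  have hr : WellFounded r := WellFounded.prod_lex wellFounded_gt wellFounded_lt
  let step : ∀ p : Fin (k+1) × ℕ, (∀ q, r q p → A q.1) → A p.1 := fun p g =>
    σ p.1 (fun ζ => F (p.1, p.2, fun i t =>
      if h : i < p.1 then ζ i h t else if h : r (i, t) p then g (i, t) h else default))
  let η : ∀ i, ℕ → A i := fun i t => hr.fix step (i, t)
  have hη : ∀ m n, η m n = step (m, n) (fun q _ => η q.1 q.2) := fun m n => hr.fix_eq step (m, n)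
  refine ⟨η, fun m n => ⟨_, hη m n, ?_⟩⟩
  simp only [trn]
  congr 3
  funext i t
  rcases lt_trichotomy i m with h | h | h
  · simp [h, h.ne]
  · subst h
    simp [r, Prod.lex_def]
  · simp [r, Prod.lex_def, h, h.not_gt, h.ne']

section grp
variable {M T Λ : Type} [Fintype M] (tr : M → ℕ → Λ → T) (a : Λ → ℕ → ℤ)

abbrev VV (T Λ : Type) : Type := (List T ⊕ (List T × Λ)) →₀ ℚ

noncomputable def ee (Λ : Type) {T : Type} (s : List T) : VV T Λ := Finsupp.single (Sum.inl s) 1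

noncomputable def ww (s : List T) (η : Λ) (n : ℕ) : VV T Λ :=
  a η n • ee Λ s + ∑ m, ee Λ (tr m n η :: s)

noncomputable def yy (u : List T × Λ) (n : ℕ) : VV T Λ :=
  ((2:ℚ) ^ n)⁻¹ • (Finsupp.single (Sum.inr u) 1 -
    ∑ i ∈ Finset.range n, (2:ℚ) ^ i • ww tr a u.1 u.2 i)

noncomputable def GG (U : Set (List T × Λ)) : Submodule ℤ (VV T Λ) :=
  Submodule.span ℤ (Set.range (ee Λ) ∪ {v | ∃ u ∈ U, ∃ n, v = yy tr a u n})

theorem yy_succ (u : List T × Λ) (n : ℕ) :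
    yy tr a u n = (2:ℤ) • yy tr a u (n+1) + ww tr a u.1 u.2 n := by
  have h2 : (2:ℤ) • yy tr a u (n+1) = (2:ℚ) • yy tr a u (n+1) := by
    rw [two_zsmul, two_smul]
  rw [h2]
  simp only [yy, Finset.sum_range_succ, smul_sub, smul_add, smul_smul]
  have e1 : (2:ℚ) * ((2:ℚ) ^ (n+1))⁻¹ = ((2:ℚ) ^ n)⁻¹ := by
    rw [pow_succ]; field_simp
  have e2 : (2:ℚ) * (((2:ℚ) ^ (n+1))⁻¹ * 2 ^ n) = 1 := by
    rw [pow_succ]; field_simp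
  rw [e1, e2, one_smul]
  abel

theorem ww_inr (s : List T) (η : Λ) (n : ℕ) (v) : ww tr a s η n (Sum.inr v) = 0 := by
  simp [ww, ee, Finsupp.single_apply]

theorem yy_inr_ne (u v : List T × Λ) (h : u ≠ v) (n : ℕ) : yy tr a u n (Sum.inr v) = 0 := by
  simp [yy, ww_inr, h, Finsupp.finsetSum_apply]

theorem yy_inr (u : List T × Λ) (n : ℕ) : yy tr a u n (Sum.inr u) ≠ 0 := by
  simp [yy, ww_inr, Finsupp.finsetSum_apply]

theorem ww_inl_ne (s : List T) (η : Λ) (n : ℕ) (t : List T) (h1 : s ≠ t)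
    (h2 : ∀ m, tr m n η :: s ≠ t) : ww tr a s η n (Sum.inl t) = 0 := by
  simp [ww, ee, h1, h2, Finsupp.finsetSum_apply]

theorem ww_inl (htr : ∀ m m' n n' η ν, tr m n η = tr m' n' ν → m = m' ∧ n = n')
    (s : List T) (η : Λ) (n : ℕ) (m : M) :
    ww tr a s η n (Sum.inl (tr m n η :: s)) = 1 := by
  classical
  have h1 : s ≠ tr m n η :: s := fun h => by simpa using congrArg List.length h
  simp only [ww, ee, Finsupp.add_apply, Finsupp.smul_apply, Finsupp.finsetSum_apply]
  rw [Finset.sum_eq_single m]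
  · simp [h1]
  · intro m' _ hm'
    rw [Finsupp.single_apply, if_neg]
    intro h
    simp only [Sum.inl.injEq, List.cons.injEq, and_true] at h
    exact hm' (htr _ _ _ _ _ _ h).1
  · simp

theorem yy_inl_ne (u : List T × Λ) (n : ℕ) (t : List T) (h1 : u.1 ≠ t)
    (h2 : ∀ i < n, ∀ m, tr m i u.2 :: u.1 ≠ t) : yy tr a u n (Sum.inl t) = 0 := by
  simp only [yy, Finsupp.smul_apply, Finsupp.sub_apply, Finsupp.finsetSum_apply]
  rw [Finset.sum_eq_zero]
  · simp
  · intro i hi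
    rw [ww_inl_ne tr a _ _ _ _ h1 (h2 i (Finset.mem_range.1 hi)), smul_zero]

theorem yy_inl (htr : ∀ m m' n n' η ν, tr m n η = tr m' n' ν → m = m' ∧ n = n')
    (u : List T × Λ) (n : ℕ) (m : M) :
    yy tr a u (n+1) (Sum.inl (tr m n u.2 :: u.1)) ≠ 0 := by
  have h1 : u.1 ≠ tr m n u.2 :: u.1 := fun h => by simpa using congrArg List.length h
  simp only [yy, Finsupp.smul_apply, Finsupp.sub_apply, Finsupp.finsetSum_apply]
  rw [Finset.sum_eq_single n]
  · rw [ww_inl tr a htr]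
    simp
  · intro i _ hi
    rw [ww_inl_ne tr a _ _ _ _ h1, smul_zero]
    intro m' h
    simp only [List.cons.injEq, and_true] at h
    exact hi (htr _ _ _ _ _ _ h).2
  · simp

theorem GG_free (htr : ∀ m m' n n' η ν, tr m n η = tr m' n' ν → m = m' ∧ n = n')
    (U : Set (List T × Λ)) (ρ : List T → Λ → Ordinal.{0})
    (hinj : ∀ s, Set.InjOn (ρ s) {η | (s, η) ∈ U})
    (mm : List T × Λ → M) (n0 : List T × Λ → ℕ)
    (h : ∀ s η ν, (s, η) ∈ U → (s, ν) ∈ U → ρ s ν < ρ s η → ∀ n ≥ n0 (s, η),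
      tr (mm (s, η)) n ν ≠ tr (mm (s, η)) n η) : Module.Free ℤ (GG tr a U) := by
  classical
  -- global rank
  obtain ⟨R, hRlen, hRs, hRinj⟩ : ∃ R : List T × Λ → Ordinal.{0},
      (∀ u v, u.1.length < v.1.length → R u < R v) ∧
      (∀ s η ν, R (s, η) < R (s, ν) ↔ ρ s η < ρ s ν) ∧ Set.InjOn R U := by
    let w : List T → Ordinal.{0} := fun s => Ordinal.typein (WellOrderingRel (α := List T)) s
    have hw : Function.Injective w := Ordinal.typein_injective _
    obtain ⟨R1, hR1⟩ := lexOrdinal (fun u : List T × Λ => (u.1.length : Ordinal.{0}))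
      (fun u => w u.1)
    obtain ⟨R, hR⟩ := lexOrdinal R1 (fun u => ρ u.1 u.2)
    have hs : ∀ s η ν, R1 (s, η) = R1 (s, ν) := by
      intro s η ν
      have h1 := hR1 (s, η) (s, ν)
      have h2 := hR1 (s, ν) (s, η)
      simp only [lt_self_iff_false, and_false, or_false, iff_false, not_lt] at h1 h2
      exact le_antisymm h2 h1
    refine ⟨R, ?_, ?_, ?_⟩
    · intro u v huv
      rw [hR, hR1]
      exact Or.inl (Or.inl (by exact_mod_cast huv))
    · intro s η ν
      rw [hR]
      simp [hs s η ν]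
    · rintro ⟨s, η⟩ hu ⟨t, ν⟩ hv huv
      have h1 := hR (s, η) (t, ν)
      have h2 := hR (t, ν) (s, η)
      simp only [huv, lt_self_iff_false, false_iff, not_or, not_and, not_lt] at h1 h2
      have h3 : R1 (s, η) = R1 (t, ν) := le_antisymm h2.1 h1.1
      have h4 := hR1 (s, η) (t, ν)
      have h5 := hR1 (t, ν) (s, η)
      simp only [h3, lt_self_iff_false, false_iff, not_or, not_and, not_lt] at h4 h5
      have h6 : (s.length : Ordinal.{0}) = t.length := le_antisymm h5.1 h4.1
      have h7 : w s = w t := le_antisymm (h5.2 h6.symm) (h4.2 h6)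
      have h8 := hw h7
      subst h8
      have h9 : ρ s η = ρ s ν := le_antisymm (h2.2 h3.symm) (h1.2 h3)
      rw [hinj s hu hv h9]
  let chosen : List T → Prop := fun x => ∃ u ∈ U, ∃ n ≥ n0 u, x = tr (mm u) n u.2 :: u.1
  let f : ({x // ¬ chosen x} ⊕ (U × ℕ)) → VV T Λ := fun i => match i with
    | Sum.inl x => ee Λ x.1
    | Sum.inr (u, n) => yy tr a u.1 (n0 u.1 + n)
  let rk : ({x // ¬ chosen x} ⊕ (U × ℕ)) → WithBot (Ordinal.{0} ×ₗ ℕ) := fun i => match i with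
    | Sum.inl _ => ⊥
    | Sum.inr (u, n) => ((toLex (R u.1, n) : Ordinal.{0} ×ₗ ℕ) : WithBot (Ordinal.{0} ×ₗ ℕ))
  let φ : ({x // ¬ chosen x} ⊕ (U × ℕ)) → VV T Λ →+ ℚ := fun i => match i with
    | Sum.inl x => Finsupp.applyAddHom (Sum.inl x.1)
    | Sum.inr (u, 0) => Finsupp.applyAddHom (Sum.inr u.1)
    | Sum.inr (u, n+1) => Finsupp.applyAddHom (Sum.inl (tr (mm u.1) (n0 u.1 + n) u.1.2 :: u.1.1))
  have hli : LinearIndependent ℤ f := by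
    refine tri_li f rk φ ?_ ?_
    · rintro (x | ⟨⟨v, hv⟩, n'⟩) (x' | ⟨⟨u, hu⟩, n⟩) hne hle
      · have : x.1 ≠ x'.1 := fun hh => hne (by rw [Subtype.ext hh])
        simp [f, φ, ee, this]
      · cases n with
        | zero => simp [f, φ, ee]
        | succ n =>
          have : x.1 ≠ tr (mm u) (n0 u + n) u.2 :: u.1 := fun hh =>
            x.2 ⟨u, hu, n0 u + n, by omega, hh⟩
          simp [f, φ, ee, this]
      · simp [rk] at hle
      · simp only [rk, WithBot.coe_le_coe, Prod.Lex.toLex_le_toLex] at hle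
        cases n with
        | zero =>
          change yy tr a v (n0 v + n') (Sum.inr u) = 0
          apply yy_inr_ne
          rintro rfl
          simp only [lt_self_iff_false, true_and, false_or, Nat.le_zero] at hle
          exact hne (by rw [hle])
        | succ n =>
          change yy tr a v (n0 v + n') (Sum.inl (tr (mm u) (n0 u + n) u.2 :: u.1)) = 0
          by_cases huv : v = u
          · subst huv
            simp only [lt_self_iff_false, true_and, false_or] at hle
            have hn : n' ≠ n + 1 := by rintro rfl; exact hne rfl
            apply yy_inl_ne
            · intro hh; simpa using congrArg List.length hh
            · intro i hi m hh
              simp only [List.cons.injEq, and_true] at hh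
              have := (htr _ _ _ _ _ _ hh).2
              omega
          · have hlt : R v < R u := by
              rcases hle with hle | hle
              · exact hle
              · exact absurd (hRinj hv hu hle.1) huv
            apply yy_inl_ne
            · intro hh
              refine absurd hlt (not_lt.2 (hRlen u v ?_).le)
              rw [hh]; simp
            · intro i hi m hh
              obtain ⟨s, η⟩ := u
              obtain ⟨t, ν⟩ := v
              simp only [List.cons.injEq] at hh
              obtain ⟨h1, rfl⟩ := hh
              obtain ⟨rfl, rfl⟩ := htr _ _ _ _ _ _ h1
              exact h t η ν hu hv ((hRs _ _ _).1 hlt) _ (by omega) h1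
    · rintro (x | ⟨⟨u, hu⟩, n⟩)
      · simp [f, φ, ee]
      · cases n with
        | zero => exact yy_inr tr a u _
        | succ n => exact yy_inl tr a htr u (n0 u + n) (mm u)
  have hy : ∀ u ∈ U, ∀ n ≥ n0 u, yy tr a u n ∈ Submodule.span ℤ (Set.range f) := by
    intro u hu n hn
    refine Submodule.subset_span ⟨Sum.inr (⟨u, hu⟩, n - n0 u), ?_⟩
    simp only [f]
    rw [Nat.add_sub_cancel' hn]
  have hne : ∀ x, ¬ chosen x → ee Λ x ∈ Submodule.span ℤ (Set.range f) := fun x hx =>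
    Submodule.subset_span ⟨Sum.inl ⟨x, hx⟩, rfl⟩
  have hch : ∀ o : Ordinal.{0}, ∀ u ∈ U, R u = o → ∀ n ≥ n0 u,
      ee Λ (tr (mm u) n u.2 :: u.1) ∈ Submodule.span ℤ (Set.range f) := by
    intro o
    induction o using WellFoundedLT.induction with
    | ind o ih =>
      rintro ⟨s, η⟩ hu rfl n hn
      have h1 := yy_succ tr a (s, η) n
      have h2 : ee Λ (tr (mm (s, η)) n η :: s) = yy tr a (s, η) n - (2:ℤ) • yy tr a (s, η) (n+1)
          - a η n • ee Λ s - ∑ m ∈ Finset.univ.erase (mm (s, η)), ee Λ (tr m n η :: s) := by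
        rw [h1, ww, ← Finset.add_sum_erase _ _ (Finset.mem_univ (mm (s, η)))]
        abel
      change ee Λ (tr (mm (s, η)) n η :: s) ∈ _
      rw [h2]
      refine Submodule.sub_mem _ (Submodule.sub_mem _ (Submodule.sub_mem _ (hy _ hu n hn)
        (Submodule.smul_mem _ _ (hy _ hu _ (by omega)))) (Submodule.smul_mem _ _ ?_))
        (Submodule.sum_mem _ ?_)
      · by_cases hc : chosen s
        · obtain ⟨v, hv, n', hn', hs⟩ := hc
          rw [hs]
          refine ih (R v) (hRlen _ _ ?_) v hv rfl n' hn'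
          rw [hs]; simp
        · exact hne _ hc
      · intro m hm
        by_cases hc : chosen (tr m n η :: s)
        · obtain ⟨⟨t, ν⟩, hv, n', hn', hs⟩ := hc
          rw [hs]
          refine ih (R (t, ν)) ?_ (t, ν) hv rfl n' hn'
          simp only [List.cons.injEq] at hs
          obtain ⟨h3, rfl⟩ := hs
          obtain ⟨h4, rfl⟩ := htr _ _ _ _ _ _ h3
          rcases lt_trichotomy (R (s, ν)) (R (s, η)) with hlt | heq | hlt
          · exact hlt
          · have h5 := hRinj hv hu heq
            rw [h5] at h4
            exact absurd h4 (Finset.ne_of_mem_erase hm)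
          · rw [h4] at h3
            exact absurd h3 (h s ν η hv hu ((hRs _ _ _).1 hlt) n hn')
        · exact hne _ hc
  have he : ∀ x, ee Λ x ∈ Submodule.span ℤ (Set.range f) := by
    intro x
    by_cases hc : chosen x
    · obtain ⟨v, hv, n', hn', hs⟩ := hc
      rw [hs]
      exact hch _ v hv rfl n' hn'
    · exact hne _ hc
  have hyall : ∀ u ∈ U, ∀ n, yy tr a u n ∈ Submodule.span ℤ (Set.range f) := by
    intro u hu n
    have hstep : ∀ n, yy tr a u (n+1) ∈ Submodule.span ℤ (Set.range f) →
        yy tr a u n ∈ Submodule.span ℤ (Set.range f) := by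
      intro n hn
      rw [yy_succ]
      exact Submodule.add_mem _ (Submodule.smul_mem _ _ hn) (Submodule.add_mem _
        (Submodule.smul_mem _ _ (he _)) (Submodule.sum_mem _ fun m _ => he _))
    have hd : ∀ d n, yy tr a u (n+d) ∈ Submodule.span ℤ (Set.range f) →
        yy tr a u n ∈ Submodule.span ℤ (Set.range f) := by
      intro d
      induction d with
      | zero => intro n hn; exact hn
      | succ d ih => intro n hn; exact ih n (hstep _ hn)
    exact hd (n0 u) n (hy u hu _ (by omega))
  have hEq : GG tr a U = Submodule.span ℤ (Set.range f) := by
    apply le_antisymm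
    · refine Submodule.span_le.2 ?_
      rintro _ (⟨x, rfl⟩ | ⟨u, hu, n, rfl⟩)
      · exact he x
      · exact hyall u hu n
    · refine Submodule.span_le.2 ?_
      rintro _ ⟨(x | ⟨u, n⟩), rfl⟩
      · exact Submodule.subset_span (Or.inl ⟨x.1, rfl⟩)
      · exact Submodule.subset_span (Or.inr ⟨u.1, u.2, _, rfl⟩)
  rw [hEq]
  exact Module.Free.of_basis (Module.Basis.span hli)

theorem GG_mono {U U' : Set (List T × Λ)} (hU : U ⊆ U') : GG tr a U ≤ GG tr a U' := by
  refine Submodule.span_mono (Set.union_subset_union_right _ ?_)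
  rintro _ ⟨u, hu, n, rfl⟩
  exact ⟨u, hU hu, n, rfl⟩

theorem GG_fin (g : VV T Λ) (hg : g ∈ GG tr a Set.univ) :
    ∃ F : Finset (List T × Λ), g ∈ GG tr a (F : Set (List T × Λ)) := by
  classical
  induction hg using Submodule.span_induction with
  | mem x hx =>
    rcases hx with hx | ⟨u, hu, n, rfl⟩
    · exact ⟨∅, Submodule.subset_span (Or.inl hx)⟩
    · exact ⟨{u}, Submodule.subset_span (Or.inr ⟨u, by simp, n, rfl⟩)⟩
  | zero => exact ⟨∅, Submodule.zero_mem _⟩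
  | add x y _ _ hx hy =>
    obtain ⟨F, hF⟩ := hx
    obtain ⟨F', hF'⟩ := hy
    exact ⟨F ∪ F', Submodule.add_mem _ (GG_mono tr a (by simp) hF) (GG_mono tr a (by simp) hF')⟩
  | smul c x _ hx =>
    obtain ⟨F, hF⟩ := hx
    exact ⟨F, Submodule.smul_mem _ _ hF⟩

theorem GG_kfree (κ : Cardinal.{0}) (hκ : ℵ₀ ≤ κ)
    (hU : ∀ U : Set (List T × Λ), #U ≤ κ → Module.Free ℤ (GG tr a U))
    (H : AddSubgroup (GG tr a Set.univ)) (hH : #H ≤ κ) : Module.Free ℤ H := by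
  classical
  choose F hF using fun g : H => GG_fin tr a g.1.1 g.1.2
  let U : Set (List T × Λ) := ⋃ g, (F g : Set (List T × Λ))
  have hc : #U ≤ κ := by
    refine (mk_iUnion_le _).trans (mul_le_of_le hκ hH ?_)
    exact ciSup_le' fun i => (Cardinal.mk_le_aleph0).trans hκ
  have := hU U hc
  let g : H →ₗ[ℤ] GG tr a U :=
    { toFun := fun x => ⟨x.1.1, GG_mono tr a (Set.subset_iUnion _ x) (hF x)⟩
      map_add' := fun x y => rfl
      map_smul' := fun c x => rfl }
  refine free_of_inj g ?_
  intro x y hxy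
  have h1 : x.1.1 = y.1.1 := congrArg (fun z : GG tr a U => z.1) hxy
  exact Subtype.ext (Subtype.ext h1)

theorem GG_dual (c : Λ → ℕ → ℤ)
    (hbb : ∀ F : T → ℤ, ∃ η, ∀ n, ∑ m, F (tr m n η) = c η n)
    (ha : ∀ η, ∀ z b : ℤ, z ≠ 0 →
      ¬ ∀ n, (2:ℤ) ^ n ∣ b - ∑ i ∈ Finset.range n, 2 ^ i * (a η i * z + c η i))
    (f : GG tr a Set.univ →+ ℤ) : f = 0 := by
  let E : List T → GG tr a Set.univ := fun s => ⟨ee Λ s, Submodule.subset_span (Or.inl ⟨s, rfl⟩)⟩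
  let Y : List T × Λ → ℕ → GG tr a Set.univ := fun u n =>
    ⟨yy tr a u n, Submodule.subset_span (Or.inr ⟨u, Set.mem_univ _, n, rfl⟩)⟩
  have hYs : ∀ u n, Y u n = (2:ℤ) • Y u (n+1) + (a u.2 n • E u.1 + ∑ m, E (tr m n u.2 :: u.1)) := by
    intro u n
    apply Subtype.ext
    simp only [Submodule.coe_add, Submodule.coe_smul, Submodule.coe_sum, Y, E]
    exact yy_succ tr a u n
  have hfY : ∀ u n, f (Y u n) = 2 * f (Y u (n+1)) +
      (a u.2 n * f (E u.1) + ∑ m, f (E (tr m n u.2 :: u.1))) := by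
    intro u n
    rw [hYs u n]
    simp only [map_add, map_zsmul, map_sum, smul_eq_mul]
  have hE : ∀ s, f (E s) = 0 := by
    intro s
    by_contra hz
    obtain ⟨η, hη⟩ := hbb (fun t => f (E (t :: s)))
    refine ha η (f (E s)) (f (Y (s, η) 0)) hz fun n => ?_
    have : f (Y (s, η) 0) - ∑ i ∈ Finset.range n, 2 ^ i * (a η i * f (E s) + c η i) =
        2 ^ n * f (Y (s, η) n) := by
      induction n with
      | zero => simp
      | succ n ih =>
        rw [Finset.sum_range_succ, ← sub_sub, ih, hfY (s, η) n, hη n]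
        ring
    rw [this]
    exact dvd_mul_right _ _
  have hY : ∀ u n, f (Y u n) = 0 := by
    intro u n
    have h1 : ∀ d, f (Y u n) = 2 ^ d * f (Y u (n + d)) := by
      intro d
      induction d with
      | zero => simp
      | succ d ih =>
        rw [ih, hfY u (n+d)]
        simp only [hE, Finset.sum_const_zero, mul_zero, add_zero]
        rw [← add_assoc]; ring
    apply Int.eq_zero_of_abs_lt_dvd (m := 2 ^ (f (Y u n)).natAbs) ⟨_, h1 _⟩
    rw [Int.abs_eq_natAbs]
    exact_mod_cast Nat.lt_two_pow_self
  have key : ∀ x (hx : x ∈ GG tr a Set.univ), f ⟨x, hx⟩ = 0 := by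
    intro x hx
    induction hx using Submodule.span_induction with
    | mem x hx =>
      rcases hx with ⟨s, rfl⟩ | ⟨u, hu, n, rfl⟩
      · exact hE s
      · exact hY u n
    | zero => exact map_zero f
    | add x y hx hy h1 h2 =>
      have : (⟨x + y, Submodule.add_mem _ hx hy⟩ : GG tr a Set.univ) = ⟨x, hx⟩ + ⟨y, hy⟩ := rfl
      rw [this, map_add, h1, h2, add_zero]
    | smul c x hx h1 =>
      have : (⟨c • x, Submodule.smul_mem _ c hx⟩ : GG tr a Set.univ) = c • ⟨x, hx⟩ := rfl
      rw [this, map_zsmul, h1, smul_zero]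
  ext ⟨x, hx⟩
  exact key x hx

theorem GG_card [Infinite T] (hΛ : #Λ ≤ #T) : #(GG tr a Set.univ) = #T := by
  have hT : #(List T) = #T := Cardinal.mk_list_eq_mk T
  have h0 : ℵ₀ ≤ #T := Cardinal.aleph0_le_mk T
  apply le_antisymm
  · refine (Cardinal.mk_subtype_le _).trans ?_
    rw [Cardinal.mk_finsupp_of_infinite]
    refine max_le ?_ ?_
    · rw [mk_sum, mk_prod]
      simp only [Cardinal.lift_id, hT]
      exact Cardinal.add_le_of_le h0 le_rfl (Cardinal.mul_le_of_le h0 le_rfl hΛ)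
    · exact (Cardinal.mk_le_aleph0).trans h0
  · rw [← hT]
    refine Cardinal.mk_le_of_injective
      (f := fun s => ⟨ee Λ s, Submodule.subset_span (Or.inl ⟨s, rfl⟩)⟩) ?_
    intro s t hst
    have h1 : ee Λ s = ee Λ t := congrArg Subtype.val hst
    simpa [ee] using Finsupp.single_left_injective one_ne_zero h1

end grp

/-- For every natural number `k` there is an abelian group `G` of
cardinality `ℶ_{k+1}` which is `ℵ_{k+1}`-free (every subgroup of cardinality less than
`ℵ_{k+1}` is a free abelian group) and such that the only group homomorphism from `G` to
`ℤ` is the zero homomorphism. -/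
theorem stmt0 (k : ℕ) :
    ∃ (G : Type) (_ : AddCommGroup G),
      #G = Cardinal.beth (k + 1) ∧
      (∀ H : AddSubgroup G, #H < Cardinal.aleph (k + 1) → Module.Free ℤ H) ∧
      ∀ f : G →+ ℤ, f = 0 := by
  classical
  let A : Fin (k+1) → Type := fun i => (beth (i.1 + 1)).out
  have hA : ∀ i, #(A i) = beth (i.1 + 1) := fun i => Cardinal.mk_out _
  have hAne : ∀ i, Nonempty (A i) := fun i => by
    rw [← Cardinal.mk_ne_zero_iff, hA]; exact beth_ne_zero _
  let _ : ∀ i, Inhabited (A i) := fun i => Classical.inhabited_of_nonempty (hAne i)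
  have hB : ∀ i, #(ℕ → A i) = beth (i.1 + 1) := by
    intro i
    have h1 : #(ℕ → A i) = #(A i) ^ ℵ₀ := by simp
    rw [h1, hA, beth_add_one, ← Cardinal.power_mul, Cardinal.mul_aleph0_eq (aleph0_le_beth _)]
  have hσ : ∀ m : Fin (k+1), ∃ g : ((∀ i : Fin (k+1), i < m → ℕ → A i) → ℤ) → A m,
      Function.Injective g := by
    intro m
    have h1 : #(∀ i : Fin (k+1), i < m → ℕ → A i) ≤ beth m.1 := by
      have : ∀ i : Fin (k+1), #(i < m → ℕ → A i) ≤ beth m.1 := by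
        intro i
        by_cases hi : i < m
        · have e : (i < m → ℕ → A i) ≃ (ℕ → A i) :=
            { toFun := fun f => f hi
              invFun := fun x _ => x
              left_inv := fun f => rfl
              right_inv := fun x => rfl }
          rw [Cardinal.mk_congr e, hB]
          refine beth_le_beth.2 ?_
          exact_mod_cast hi
        · have : Subsingleton (i < m → ℕ → A i) := ⟨fun f g => funext fun h => absurd h hi⟩
          exact (Cardinal.le_one_iff_subsingleton.2 this).trans
            ((Cardinal.one_le_aleph0).trans (aleph0_le_beth _))
      rw [Cardinal.mk_pi]
      refine (Cardinal.prod_le_prod _ (fun _ => beth m.1) this).trans ?_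
      rw [Cardinal.prod_const]
      simp only [Cardinal.lift_id, Cardinal.mk_fin, Cardinal.lift_uzero, Cardinal.lift_natCast]
      exact Cardinal.power_nat_le (aleph0_le_beth _)
    have h2 : #((∀ i : Fin (k+1), i < m → ℕ → A i) → ℤ) ≤ #(A m) := by
      have h3 : #((∀ i : Fin (k+1), i < m → ℕ → A i) → ℤ) =
        ℵ₀ ^ #(∀ i : Fin (k+1), i < m → ℕ → A i) := by
        rw [← Cardinal.mk_int]; rfl
      rw [h3, hA, beth_add_one]
      refine (Cardinal.power_le_power_left Cardinal.aleph0_ne_zero h1).trans ?_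
      rw [Cardinal.power_eq_two_power (aleph0_le_beth _) (by
        exact_mod_cast (Cardinal.natCast_lt_aleph0 (n := 2)).le) (aleph0_le_beth _)]
    obtain ⟨g⟩ := h2
    exact ⟨g, g.injective⟩
  choose σ hσ using hσ
  have hΛ : #(∀ i, ℕ → A i) = beth (k + 1) := by
    apply le_antisymm
    · rw [Cardinal.mk_pi]
      refine (Cardinal.prod_le_prod _ (fun _ => beth (k+1)) ?_).trans ?_
      · intro i
        rw [hB]
        refine beth_le_beth.2 ?_
        exact_mod_cast i.2
      · rw [Cardinal.prod_const]
        simp only [Cardinal.lift_id, Cardinal.mk_fin, Cardinal.lift_uzero, Cardinal.lift_natCast]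
        exact Cardinal.power_nat_le (aleph0_le_beth _)
    · have h1 : #(ℕ → A (Fin.last k)) = beth (k + 1) := by rw [hB]; simp
      rw [← h1]
      exact Cardinal.mk_le_of_surjective (f := fun η : (∀ i, ℕ → A i) => η (Fin.last k))
        (Function.surjective_eval _)
  have hT : #(Fin (k+1) × ℕ × (∀ i, ℕ → A i)) = beth (k+1) := by
    rw [Cardinal.mk_prod, Cardinal.mk_prod, hΛ]
    simp only [Cardinal.lift_id, Cardinal.mk_fin, Cardinal.mk_nat]
    rw [Cardinal.aleph0_mul_eq (aleph0_le_beth _)]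
    exact Cardinal.mul_eq_right (aleph0_le_beth _)
      ((Cardinal.natCast_lt_aleph0).le.trans (aleph0_le_beth _)) (by exact_mod_cast Nat.succ_ne_zero k)
  let π : ∀ m : Fin (k+1), A m → ((∀ i : Fin (k+1), i < m → ℕ → A i) → ℤ) := fun m =>
    Function.invFun (σ m)
  have hπ : ∀ m g, π m (σ m g) = g := fun m g => Function.leftInverse_invFun (hσ m) g
  let c : (∀ i, ℕ → A i) → ℕ → ℤ := fun η n => ∑ m, π m (η m n) (fun i _ => η i)
  choose a ha using fun η => choose_a (c η)
  have : Infinite (Fin (k+1) × ℕ × (∀ i, ℕ → A i)) := by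
    rw [Cardinal.infinite_iff, hT]; exact aleph0_le_beth _
  refine ⟨GG trn a Set.univ, inferInstance, ?_, ?_, ?_⟩
  · rw [GG_card, hT]
    rw [hT, hΛ]
  · intro H hH
    have hH' : #H ≤ aleph k := by
      rw [← Cardinal.succ_aleph] at hH
      exact Order.le_of_lt_succ hH
    refine GG_kfree trn a (aleph k) (aleph0_le_aleph _) ?_ H hH'
    intro U hU
    have hs : ∀ s, #{η | (s, η) ∈ U} ≤ aleph k := by
      intro s
      refine le_trans ?_ hU
      refine Cardinal.mk_le_of_injective (f := fun η => ⟨(s, η.1), η.2⟩) ?_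
      intro x y hxy
      apply Subtype.ext
      simpa using hxy
    choose ρ hρ hρ' using fun s => comb k {η | (s, η) ∈ U} (fun _ => Finset.univ) (hs s)
      (by simp)
    have hex : ∀ u : List (Fin (k+1) × ℕ × (∀ i, ℕ → A i)) × (∀ i, ℕ → A i),
        ∃ p : Fin (k+1) × ℕ, u ∈ U → ∀ ν, (u.1, ν) ∈ U → ρ u.1 ν < ρ u.1 u.2 →
          ∀ n ≥ p.2, trn p.1 n ν ≠ trn p.1 n u.2 := by
      intro u
      by_cases hu : u ∈ U
      · obtain ⟨m, -, n0, hn0⟩ := hρ' u.1 u.2 hu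
        exact ⟨(m, n0), fun _ ν hν => hn0 ν hν⟩
      · exact ⟨(0, 0), fun h => absurd h hu⟩
    choose p hp using hex
    exact GG_free trn a (fun _ _ _ _ _ _ h => trn_eq h) U ρ hρ (fun u => (p u).1)
      (fun u => (p u).2) (fun s η ν hη hν hlt => hp (s, η) hη ν hν hlt)
  · refine GG_dual trn a c ?_ ha
    intro F
    obtain ⟨η, hη⟩ := blackbox σ F
    refine ⟨η, fun n => Finset.sum_congr rfl fun m _ => ?_⟩
    obtain ⟨g, hg1, hg2⟩ := hη m n
    rw [hg2, hg1, hπ]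
end

section
/- Let (S, Λ) be a combinatorial k-parameter admitting a (Λ, χ̄)-black box where χ_m = 2^{ℵ_0} for every m ≤ k (taking S_m = S for all m ≤ k). Then there exists a function a : Λ × ℕ → ℤ such that, in the group G_x for the abelian-group k-parameter x = (S, Λ, a), every group homomorphism h : G_x → ℤ satisfies h(z) = 0, where z is the distinguished generator of G_x. -/
open Cardinal

namespace Sh883

/-- A "restricted tuple": the result of replacing the `m`-th coordinate of a `(k+1)`-tuple
of functions `ℕ → S` by a finite sequence (list) of elements of `S`, keeping the other
coordinates. -/
structure Res (k : ℕ) (S : Type u) where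
  m : Fin (k + 1)
  seq : List S
  rest : (l : Fin (k + 1)) → l ≠ m → ℕ → S

/-- `η̄↾⟨m,n⟩` : replace the `m`-th coordinate of `η̄` by the finite sequence
`⟨η_m(0), …, η_m(n-1)⟩`. -/
def restrictAt {k : ℕ} {S : Type u} (η : Fin (k + 1) → ℕ → S) (m : Fin (k + 1)) (n : ℕ) :
    Res k S :=
  ⟨m, List.ofFn fun i : Fin n => η m i, fun l _ => η l⟩

/-- `Λ_m = {η̄↾⟨m,n⟩ : η̄ ∈ Λ, n ∈ ℕ}`. -/
def LambdaResAt {k : ℕ} {S : Type u} (Λ : Set (Fin (k + 1) → ℕ → S)) (m : Fin (k + 1)) :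
    Set (Res k S) :=
  {ν | ∃ η ∈ Λ, ∃ n : ℕ, ν = restrictAt η m n}

/-- `Λ_0 ∪ … ∪ Λ_k`. -/
def LambdaRes {k : ℕ} {S : Type u} (Λ : Set (Fin (k + 1) → ℕ → S)) : Set (Res k S) :=
  ⋃ m, LambdaResAt Λ m

/-- The generators of the group `G_x`: `x_ν` for `ν ∈ Λ_0 ∪ … ∪ Λ_k`, `y_{η̄,n}` for
`η̄ ∈ Λ`, `n ∈ ℕ`, and `z`. -/
inductive Gen (k : ℕ) (S : Type u) (Λ : Set (Fin (k + 1) → ℕ → S)) : Type u where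
  | X : ↥(LambdaRes Λ) → Gen k S Λ
  | Y : ↥Λ → ℕ → Gen k S Λ
  | Z : Gen k S Λ

/-- `η̄↾⟨m,n⟩` as an element of `Λ_0 ∪ … ∪ Λ_k`, for `η̄ ∈ Λ`. -/
def resMem {k : ℕ} {S : Type u} {Λ : Set (Fin (k + 1) → ℕ → S)} (η : ↥Λ) (m : Fin (k + 1))
    (n : ℕ) : ↥(LambdaRes Λ) :=
  ⟨restrictAt (η : Fin (k + 1) → ℕ → S) m n, Set.mem_iUnion.2 ⟨m, (η : _), η.2, n, rfl⟩⟩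

/-- The relation element `n!·y_{η̄,n+1} − y_{η̄,n} − a(η̄,n)·z − Σ_{m≤k} x_{η̄↾⟨m,n⟩}`. -/
def relEl {k : ℕ} {S : Type u} {Λ : Set (Fin (k + 1) → ℕ → S)} (a : ↥Λ → ℕ → ℤ)
    (η : ↥Λ) (n : ℕ) : FreeAbelianGroup (Gen k S Λ) :=
  (n.factorial : ℤ) • FreeAbelianGroup.of (Gen.Y η (n + 1))
    - FreeAbelianGroup.of (Gen.Y η n)
    - a η n • FreeAbelianGroup.of Gen.Z
    - ∑ m : Fin (k + 1), FreeAbelianGroup.of (Gen.X (resMem η m n))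

/-- The subgroup of relations. -/
def relSub {k : ℕ} {S : Type u} {Λ : Set (Fin (k + 1) → ℕ → S)} (a : ↥Λ → ℕ → ℤ) :
    AddSubgroup (FreeAbelianGroup (Gen k S Λ)) :=
  AddSubgroup.closure {g | ∃ (η : ↥Λ) (n : ℕ), g = relEl a η n}

/-- The group `G_x` of the abelian-group `k`-parameter `x = (S, Λ, a)`. -/
abbrev Gx {k : ℕ} {S : Type u} {Λ : Set (Fin (k + 1) → ℕ → S)} (a : ↥Λ → ℕ → ℤ) : Type u :=
  FreeAbelianGroup (Gen k S Λ) ⧸ relSub a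


/-- The image of the generator `x_ν` in `G_x`. -/
def xg {k : ℕ} {S : Type u} {Λ : Set (Fin (k + 1) → ℕ → S)} (a : ↥Λ → ℕ → ℤ)
    (ν : ↥(LambdaRes Λ)) : Gx a :=
  QuotientAddGroup.mk (FreeAbelianGroup.of (Gen.X ν))

/-- The image of the generator `y_{η̄,n}` in `G_x`. -/
def yg {k : ℕ} {S : Type u} {Λ : Set (Fin (k + 1) → ℕ → S)} (a : ↥Λ → ℕ → ℤ)
    (η : ↥Λ) (n : ℕ) : Gx a :=
  QuotientAddGroup.mk (FreeAbelianGroup.of (Gen.Y η n))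

/-- The image of the distinguished generator `z` in `G_x`. -/
def zg {k : ℕ} {S : Type u} {Λ : Set (Fin (k + 1) → ℕ → S)} (a : ↥Λ → ℕ → ℤ) : Gx a :=
  QuotientAddGroup.mk (FreeAbelianGroup.of Gen.Z)

/-- The subgroup `G_U` of `G_x`, for a set `U` of functions `ℕ → S`: generated by `z`,
the `y_{η̄,n}` for `η̄ ∈ Λ` with all coordinates in `U`, and the `x_{η̄↾⟨m,n⟩}` for
`η̄` a `(k+1)`-tuple of members of `U` with `η̄↾⟨m,n⟩ ∈ Λ_m`. -/
def GU {k : ℕ} {S : Type u} {Λ : Set (Fin (k + 1) → ℕ → S)} (a : ↥Λ → ℕ → ℤ)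
    (U : Set (ℕ → S)) : AddSubgroup (Gx a) :=
  AddSubgroup.closure
    ({zg a}
      ∪ {g | ∃ (η : ↥Λ) (n : ℕ),
          (∀ l : Fin (k + 1), (η : Fin (k + 1) → ℕ → S) l ∈ U) ∧ g = yg a η n}
      ∪ {g | ∃ (η : Fin (k + 1) → ℕ → S) (m : Fin (k + 1)) (n : ℕ) (ν : ↥(LambdaRes Λ)),
          (∀ l : Fin (k + 1), η l ∈ U) ∧ (ν : Res k S) = restrictAt η m n ∧ g = xg a ν})

/-- The subgroup `G_{U,u}` of `G_x`: generated by the union of the subgroups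
`G_{U ∪ (u ∖ {η})}` for `η ∈ u`. -/
def GUu {k : ℕ} {S : Type u} {Λ : Set (Fin (k + 1) → ℕ → S)} (a : ↥Λ → ℕ → ℤ)
    (U u : Set (ℕ → S)) : AddSubgroup (Gx a) :=
  ⨆ η ∈ u, GU a (U ∪ (u \ {η}))

/-- A `(Λ, χ̄)`-black box: a family of ordinals `α_{η̄,m,n} < χ_m` such that every
function `h` on `Λ_0 ∪ … ∪ Λ_k` with `h(ν)` an ordinal `< χ_m` for `ν ∈ Λ_m` is
predicted: there is `η̄ ∈ Λ` with `h(η̄↾⟨m,n⟩) = α_{η̄,m,n}` for all `m ≤ k`, `n ∈ ℕ`. -/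
def IsBlackBox {k : ℕ} {S : Type u} (Λ : Set (Fin (k + 1) → ℕ → S))
    (χ : Fin (k + 1) → Cardinal.{u}) (A : ↥Λ → Fin (k + 1) → ℕ → Ordinal.{u}) : Prop :=
  (∀ (η : ↥Λ) (m : Fin (k + 1)) (n : ℕ), A η m n < (χ m).ord) ∧
    ∀ h : Res k S → Ordinal.{u},
      (∀ m : Fin (k + 1), ∀ ν ∈ LambdaResAt Λ m, h ν < (χ m).ord) →
      ∃ η : ↥Λ, ∀ (m : Fin (k + 1)) (n : ℕ),
        h (restrictAt (η : Fin (k + 1) → ℕ → S) m n) = A η m n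

end Sh883

theorem Sh883.no_sol (s : ℕ → ℤ) (c : ℤ) (hc : c ≠ 0) :
    ∃ a : ℕ → ℤ, ¬ ∃ y : ℕ → ℤ, ∀ n, (n.factorial : ℤ) * y (n + 1) = y n + a n * c + s n := by
  by_contra hcon
  push Not at hcon
  let b : (ℕ → Bool) → ℕ → ℤ := fun f n =>
    if n < c.natAbs + 1 then 0 else if f (n - (c.natAbs + 1)) then 1 else 0
  choose y hy using fun f => hcon (b f)
  have hinj : Function.Injective fun f => y f 0 := by
    intro f g hfg
    have hb : ∀ n, y f n = y g n → b f n = b g n := by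
      intro n hn
      by_cases h : n < c.natAbs + 1
      · simp only [b, if_pos h]
      have h1 : (n.factorial : ℤ) ∣ (b f n - b g n) * c :=
        ⟨y f (n + 1) - y g (n + 1), by linear_combination -hn + hy g n - hy f n⟩
      have h2 : c.natAbs < n.factorial := lt_of_lt_of_le (by omega) (Nat.self_le_factorial n)
      have h3 : ¬ (n.factorial : ℤ) ∣ c := by
        intro hd
        have := Nat.le_of_dvd (Int.natAbs_pos.2 hc) (Int.natCast_dvd.1 hd)
        omega
      simp only [b, h, if_false] at h1 ⊢
      cases hf : f (n - (c.natAbs + 1)) <;> cases hg : g (n - (c.natAbs + 1)) <;>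
        simp [hf, hg] at h1 ⊢ <;> exact h3 h1
    have hyy : ∀ n, y f n = y g n := by
      intro n
      induction n with
      | zero => exact hfg
      | succ n ih =>
        have hp : (n.factorial : ℤ) ≠ 0 := by exact_mod_cast n.factorial_ne_zero
        apply mul_left_cancel₀ hp
        rw [hy f n, hy g n, ih, hb n ih]
    funext n
    have := hb (n + (c.natAbs + 1)) (hyy _)
    simp only [b] at this
    cases hf : f n <;> cases hg : g n <;> simp [hf, hg] at this ⊢ <;> omega
  have : Countable (ℕ → Bool) := hinj.countable
  have h1 := Cardinal.mk_le_aleph0 (α := ℕ → Bool)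
  have h2 := Cardinal.cantor ℵ₀
  have h3 : Cardinal.mk (ℕ → Bool) = 2 ^ ℵ₀ := by
    rw [← Cardinal.power_def, Cardinal.mk_bool, Cardinal.mk_nat]
  rw [h3] at h1
  exact absurd h1 (not_le.2 h2)

open Sh883 in
/-- Let `(S, Λ)` be a combinatorial `k`-parameter admitting a
`(Λ, χ̄)`-black box where `χ_m = 2^{ℵ₀}` for every `m ≤ k`.  Then there is a function
`a : Λ × ℕ → ℤ` such that in the group `G_x` for `x = (S, Λ, a)`, every homomorphism
`h : G_x → ℤ` kills the distinguished generator `z`. -/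
theorem stmt3 {k : ℕ} {S : Type u} (Λ : Set (Fin (k + 1) → ℕ → S))
    (A : ↥Λ → Fin (k + 1) → ℕ → Ordinal.{u})
    (hbb : IsBlackBox Λ (fun _ => 2 ^ (ℵ₀ : Cardinal.{u})) A) :
    ∃ a : ↥Λ → ℕ → ℤ, ∀ h : Gx a →+ ℤ, h (zg a) = 0 := by
  obtain ⟨e, hinj, hlt⟩ : ∃ e : ℤ × ℤ → Ordinal.{u}, Function.Injective e ∧
      ∀ p, e p < ((2 : Cardinal.{u}) ^ (ℵ₀ : Cardinal.{u})).ord := by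
    refine ⟨fun p => ((Encodable.encode p : ℕ) : Ordinal.{u}), ?_, ?_⟩
    · intro p q h
      exact Encodable.encode_injective (Nat.cast_injective h)
    · intro p
      refine lt_of_lt_of_le (Ordinal.natCast_lt_omega0 _) ?_
      rw [← Cardinal.ord_aleph0]
      exact Cardinal.ord_le_ord.2 (Cardinal.cantor _).le
  have key : ∀ η : ↥Λ, ∃ a : ℕ → ℤ, ∀ (s : Fin (k + 1) → ℕ → ℤ) (c : ℤ), c ≠ 0 →
      (∀ m n, e (s m n, c) = A η m n) →
      ¬ ∃ y : ℕ → ℤ, ∀ n, (n.factorial : ℤ) * y (n + 1) = y n + a n * c + ∑ m, s m n := by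
    intro η
    by_cases hex : ∃ (s : Fin (k + 1) → ℕ → ℤ) (c : ℤ), c ≠ 0 ∧ ∀ m n, e (s m n, c) = A η m n
    · obtain ⟨s, c, hc, hs⟩ := hex
      obtain ⟨a, ha⟩ := Sh883.no_sol (fun n => ∑ m, s m n) c hc
      refine ⟨a, fun s' c' hc' hs' => ?_⟩
      have hh : ∀ m n, s' m n = s m n ∧ c' = c := fun m n =>
        Prod.mk.inj (hinj ((hs' m n).trans (hs m n).symm))
      have h1 : s' = s := by
        funext m n
        exact (hh m n).1
      have h2 : c' = c := (hh 0 0).2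
      subst h1 h2
      exact ha
    · exact ⟨0, fun s c hc hs => absurd ⟨s, c, hc, hs⟩ hex⟩
  choose a ha using key
  refine ⟨a, fun h => ?_⟩
  by_contra hz
  classical
  obtain ⟨η, hη⟩ := hbb.2
    (fun ν => if hν : ν ∈ LambdaRes Λ then e (h (xg a ⟨ν, hν⟩), h (zg a)) else e (0, 0))
    (by
      intro m ν _
      dsimp only
      split_ifs <;> exact hlt _)
  refine ha η (fun m n => h (xg a (resMem η m n))) (h (zg a)) hz ?_
    ⟨fun n => h (yg a η n), ?_⟩
  · intro m n
    rw [← hη m n, dif_pos (show restrictAt (η : Fin (k + 1) → ℕ → S) m n ∈ LambdaRes Λ from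
      (resMem η m n).2)]
    rfl
  · intro n
    have h0 : (QuotientAddGroup.mk' (relSub a)) (relEl a η n) = 0 :=
      (QuotientAddGroup.eq_zero_iff _).2 (AddSubgroup.subset_closure ⟨η, n, rfl⟩)
    have h1 := congrArg h h0
    simp only [relEl, map_sub, map_sum, map_zsmul, map_zero, smul_eq_mul] at h1
    simp only [xg, yg, zg]
    simp only [QuotientAddGroup.mk'_apply] at h1
    linear_combination h1
end

section
/- Let x = (S, Λ, a) be an abelian-group k*-parameter, let U be a set of functions from ℕ to S, and let u be a finite set of functions from ℕ to S disjoint from U. If |u| ≤ k ≤ k* for some natural number k and the cardinality of U is at most ℵ_{k*−k}, then G_{U,u} is a subgroup of G_{U∪u} and the quotient group G_{U∪u}/G_{U,u} is a free abelian group. -/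
open Cardinal

namespace Sh883

lemma restrictAt_inj {k : ℕ} {S : Type u} {η η' : Fin (k + 1) → ℕ → S} {m m' : Fin (k + 1)}
    {n n' : ℕ} (h : restrictAt η m n = restrictAt η' m' n') :
    m = m' ∧ n = n' ∧ (∀ i < n, η m i = η' m i) ∧ ∀ l, l ≠ m → η l = η' l := by
  unfold restrictAt at h
  rw [Res.mk.injEq] at h
  obtain ⟨rfl, h2, h3⟩ := h
  have hn : n = n' := by simpa using congrArg List.length h2
  subst hn
  refine ⟨rfl, rfl, ?_, ?_⟩
  · intro i hi
    have := List.ofFn_injective h2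
    exact congrFun this ⟨i, hi⟩
  · intro l hl
    exact congrFun (congrFun (eq_of_heq h3) l) hl

lemma restrictAt_congr {k : ℕ} {S : Type u} {η η' : Fin (k + 1) → ℕ → S} {m : Fin (k + 1)}
    {n : ℕ} (h1 : ∀ i < n, η m i = η' m i) (h2 : ∀ l, l ≠ m → η l = η' l) :
    restrictAt η m n = restrictAt η' m n := by
  unfold restrictAt
  have e1 : (fun i : Fin n => η m i) = fun i : Fin n => η' m i := funext fun i => h1 i i.2
  have e2 : (fun (l : Fin (k+1)) (_ : l ≠ m) => η l) = fun (l : Fin (k+1)) (_ : l ≠ m) => η' l :=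
    funext fun l => funext fun hl => h2 l hl
  rw [e1, e2]

def XS (k : ℕ) {S : Type u} (V : Set (ℕ → S)) : Set (Res k S) :=
  {ν | ∃ (η : Fin (k + 1) → ℕ → S) (m : Fin (k + 1)) (n : ℕ),
    (∀ l, η l ∈ V) ∧ ν = restrictAt η m n}

def AS (k : ℕ) {S : Type u} (U w : Set (ℕ → S)) : Set (Res k S) :=
  {ν | ∃ θ ∈ w, ν ∈ XS k (U ∪ (w \ {θ}))}

def LS (k : ℕ) {S : Type u} (U w : Set (ℕ → S)) : Set (Fin (k + 1) → ℕ → S) :=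
  {η | (∀ l, η l ∈ U ∪ w) ∧ ∀ θ ∈ w, ∃ l, η l = θ}

def Good (k : ℕ) {S : Type u} (U w : Set (ℕ → S)) : Prop :=
  ∃ r : (Fin (k + 1) → ℕ → S) → (Fin (k + 1) → ℕ → S) → Prop, WellFounded r ∧
    (∀ x ∈ LS k U w, ∀ y ∈ LS k U w, r x y ∨ x = y ∨ r y x) ∧
    ∀ η ∈ LS k U w, ∃ (m : Fin (k + 1)) (N : ℕ), ∀ n, N ≤ n →
      restrictAt η m n ∉ AS k U w ∧
      ∀ η' ∈ LS k U w, r η' η → ∀ m' n', restrictAt η m n ≠ restrictAt η' m' n'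

lemma exists_coord {k : ℕ} {S : Type u} {w : Set (ℕ → S)} (hw : w.Finite)
    (hc : w.ncard ≤ k) {η : Fin (k + 1) → ℕ → S} (h : ∀ θ ∈ w, ∃ l, η l = θ) :
    ∃ m : Fin (k + 1), ∀ θ ∈ w, ∃ l, l ≠ m ∧ η l = θ := by
  classical
  choose! f hf using h
  have h1 : (f '' w).ncard ≤ k := (Set.ncard_image_le hw).trans hc
  have : ∃ m, m ∉ f '' w := by
    by_contra! hcon
    have : f '' w = Set.univ := Set.eq_univ_of_forall hcon
    rw [this, Set.ncard_univ] at h1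
    simp at h1
  obtain ⟨m, hm⟩ := this
  exact ⟨m, fun θ hθ => ⟨f θ, fun e => hm ⟨θ, hθ, e⟩, hf θ hθ⟩⟩

lemma good_base {k : ℕ} {S : Type u} {U w : Set (ℕ → S)} (hU : U.Countable) (hw : w.Finite)
    (hd : Disjoint U w) (hc : w.ncard ≤ k) : Good k U w := by
  have hL : (LS k U w).Countable := by
    refine Set.Countable.mono (s₂ := {η | ∀ l, η l ∈ U ∪ w}) (fun η h => h.1) ?_
    exact Set.countable_pi (fun _ => hU.union hw.countable)
  obtain ⟨f, hf⟩ := Set.countable_iff_exists_injOn.1 hL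
  refine ⟨InvImage (· < ·) f, InvImage.wf f wellFounded_lt, ?_, ?_⟩
  · intro x hx y hy
    rcases lt_trichotomy (f x) (f y) with h | h | h
    · exact Or.inl h
    · exact Or.inr (Or.inl (hf hx hy h))
    · exact Or.inr (Or.inr h)
  · intro η hη
    obtain ⟨m, hm⟩ := exists_coord hw hc hη.2
    have hfin : {η' | η' ∈ LS k U w ∧ f η' < f η}.Finite := by
      refine Set.Finite.of_finite_image ((Set.finite_Iio (f η)).subset ?_)
        (hf.mono fun x hx => hx.1)
      rintro _ ⟨x, hx, rfl⟩
      exact hx.2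
    have hev : ∀ᶠ n in Filter.atTop, ∀ η' ∈ {η' | η' ∈ LS k U w ∧ f η' < f η},
        ∀ m' n', restrictAt η m n ≠ restrictAt η' m' n' := by
      rw [Filter.eventually_all_finite hfin]
      rintro η' ⟨_, hlt⟩
      by_cases hr : ∀ l, l ≠ m → η l = η' l
      · have hne : η m ≠ η' m := by
          intro e
          have : η = η' := funext fun l => by
            by_cases hl : l = m
            · rw [hl, e]
            · exact hr l hl
          rw [this] at hlt
          exact lt_irrefl _ hlt
        obtain ⟨i, hi⟩ := Function.ne_iff.1 hne
        filter_upwards [Filter.eventually_gt_atTop i] with n hn m' n' e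
        exact hi ((restrictAt_inj e).2.2.1 i hn)
      · exact Filter.Eventually.of_forall fun n m' n' e => hr (restrictAt_inj e).2.2.2
    obtain ⟨N, hN⟩ := Filter.eventually_atTop.1 hev
    refine ⟨m, N, fun n hn => ⟨?_, fun η' h1 h2 => hN n hn η' ⟨h1, h2⟩⟩⟩
    rintro ⟨θ, hθ, ζ, m'', n'', hζ, e⟩
    obtain ⟨l, hl, hlθ⟩ := hm θ hθ
    have h1 := (restrictAt_inj e).2.2.2 l hl
    have h2 := hζ l
    rw [← h1, hlθ] at h2
    rcases h2 with h2 | h2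
    · exact Set.disjoint_left.1 hd h2 hθ
    · exact h2.2 rfl

lemma reflect {k : ℕ} {S : Type u} {U w U' w' : Set (ℕ → S)} (hd : Disjoint U w)
    (hw : w ⊆ w')
    (hcl : ∀ θ ∈ w, ∀ n, (∃ b ∈ U, ∀ i < n, θ i = b i) → ∃ b ∈ U', ∀ i < n, θ i = b i)
    {η : Fin (k + 1) → ℕ → S} (hη : ∀ l, η l ∈ U' ∪ w') {m : Fin (k + 1)} {n : ℕ}
    (h : restrictAt η m n ∈ AS k U w) : restrictAt η m n ∈ AS k U' w' := by
  classical
  obtain ⟨θ, hθ, ζ, m', n', hζ, e⟩ := h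
  obtain ⟨rfl, rfl, e1, e2⟩ := restrictAt_inj e
  refine ⟨θ, hw hθ, ?_⟩
  have key : ∀ l, η l ≠ θ → η l ∈ U' ∪ (w' \ {θ}) := by
    intro l hl
    rcases hη l with h | h
    · exact Or.inl h
    · exact Or.inr ⟨h, hl⟩
  have hne : ∀ l, ζ l ≠ θ := by
    intro l hl
    rcases hζ l with h | h
    · exact Set.disjoint_left.1 hd h (hl ▸ hθ)
    · exact h.2 hl
  have hoth : ∀ l, l ≠ m → η l ∈ U' ∪ (w' \ {θ}) := by
    intro l hl
    apply key
    rw [e2 l hl]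
    exact hne l
  have main : ∃ b ∈ U' ∪ (w' \ {θ}), ∀ i < n, η m i = b i := by
    by_cases hm : η m = θ
    · rcases hζ m with h | h
      · obtain ⟨b, hb, hb2⟩ := hcl θ hθ n ⟨ζ m, h, fun i hi => by rw [← hm]; exact e1 i hi⟩
        exact ⟨b, Or.inl hb, by rw [hm]; exact hb2⟩
      · exact ⟨ζ m, Or.inr ⟨hw h.1, h.2⟩, e1⟩
    · exact ⟨η m, key m hm, fun _ _ => rfl⟩
  obtain ⟨b, hb, hb2⟩ := main
  refine ⟨Function.update η m b, m, n, ?_, ?_⟩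
  · intro l
    by_cases hl : l = m
    · subst hl; simpa using hb
    · simpa [hl] using hoth l hl
  · apply restrictAt_congr
    · simpa using hb2
    · intro l hl
      simp [hl]

lemma exists_rank {X : Type u} (U : Set X) (c : Cardinal.{u}) (hU : #U ≤ Order.succ c) :
    ∃ ρ : X → Ordinal.{u}, Set.InjOn ρ U ∧ ∀ x ∈ U, #{y | y ∈ U ∧ ρ y < ρ x} ≤ c := by
  classical
  obtain ⟨r, wo, hr⟩ := Cardinal.exists_ord_eq U
  refine ⟨fun x => if h : x ∈ U then Ordinal.typein r ⟨x, h⟩ else 0, ?_, ?_⟩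
  · intro x hx y hy h
    simp only [hx, hy, dif_pos] at h
    exact congrArg Subtype.val (Ordinal.typein_injective r h)
  · intro x hx
    have h1 : (Ordinal.typein r ⟨x, hx⟩).card < #U := by
      have := Ordinal.typein_lt_type r ⟨x, hx⟩
      rw [← hr] at this
      exact Cardinal.lt_ord.1 this
    have h2 : (Ordinal.typein r ⟨x, hx⟩).card ≤ c := Order.lt_succ_iff.1 (h1.trans_le hU)
    refine le_trans ?_ h2
    rw [Ordinal.card_typein]
    refine Cardinal.mk_le_of_injective
      (f := fun y : {y | y ∈ U ∧ (if h : y ∈ U then Ordinal.typein r ⟨y, h⟩ else 0) <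
        (if h : x ∈ U then Ordinal.typein r ⟨x, h⟩ else 0)} =>
        (⟨⟨y.1, y.2.1⟩, ?_⟩ : {z // r z ⟨x, hx⟩})) ?_
    · have := y.2.2
      simp only [hx, y.2.1, dif_pos] at this
      exact (Ordinal.typein_lt_typein r).1 this
    · intro y z h
      simpa [Subtype.ext_iff] using h

lemma good_all {k : ℕ} {S : Type u} (j : ℕ) : ∀ (U w : Set (ℕ → S)), w.Finite → Disjoint U w →
    w.ncard + j ≤ k → #U ≤ Cardinal.aleph (j : Ordinal.{u}) → Good k U w := by
  classical
  induction j with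
  | zero =>
    intro U w hw hd hc hU
    refine good_base ?_ hw hd (by omega)
    rw [← Cardinal.le_aleph0_iff_set_countable]
    simpa using hU
  | succ j ih =>
    intro U w hw hd hc hU
    have hal : Cardinal.aleph ((j + 1 : ℕ) : Ordinal.{u}) =
        Order.succ (Cardinal.aleph (j : Ordinal.{u})) := by
      rw [Nat.cast_succ, ← Order.succ_eq_add_one, Cardinal.aleph_succ]
    rw [hal] at hU
    obtain ⟨ρ0, hρinj, hρc⟩ := exists_rank U _ hU
    have hex : ∀ (θ : ℕ → S) (n : ℕ), ∃ b, (∃ b ∈ U, ∀ i < n, θ i = b i) →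
        b ∈ U ∧ ∀ i < n, θ i = b i := by
      intro θ n
      by_cases h : ∃ b ∈ U, ∀ i < n, θ i = b i
      · obtain ⟨b, hb⟩ := h
        exact ⟨b, fun _ => hb⟩
      · exact ⟨θ, fun h' => absurd h' h⟩
    choose g hg using hex
    set U0 : Set (ℕ → S) := U ∩ ⋃ θ ∈ w, Set.range (g θ) with hU0
    have hU0c : U0.Countable :=
      Set.Countable.mono Set.inter_subset_right
        (hw.countable.biUnion fun θ _ => Set.countable_range _)
    have hU0card : #U0 ≤ Cardinal.aleph (j : Ordinal.{u}) :=
      (Cardinal.le_aleph0_iff_set_countable.2 hU0c).trans (Cardinal.aleph0_le_aleph _)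
    have hcl0 : ∀ θ ∈ w, ∀ n, (∃ b ∈ U, ∀ i < n, θ i = b i) → ∃ b ∈ U0, ∀ i < n, θ i = b i := by
      intro θ hθ n h
      refine ⟨g θ n, ⟨(hg θ n h).1, ?_⟩, (hg θ n h).2⟩
      exact Set.mem_biUnion hθ ⟨n, rfl⟩
    obtain ⟨ρ, hρ⟩ : ∃ ρ : (ℕ → S) → Ordinal.{u}, ρ = fun b =>
      if b ∈ U ∧ b ∉ U0 then Order.succ (ρ0 b) else 0 := ⟨_, rfl⟩
    have hρpos : ∀ b, 0 < ρ b → b ∈ U ∧ b ∉ U0 ∧ ρ b = Order.succ (ρ0 b) := by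
      intro b hb
      by_cases h : b ∈ U ∧ b ∉ U0
      · exact ⟨h.1, h.2, by simp [hρ, h]⟩
      · simp [hρ, h] at hb
    have hρ0 : ∀ b, b ∈ U0 → ρ b = 0 := fun b hb => by simp [hρ, hb]
    have hρzero : ∀ b ∈ U, ρ b = 0 → b ∈ U0 := by
      intro b hb h
      by_contra hn
      simp [hρ, hb, hn] at h
    have hρu : ∀ b, b ∉ U → ρ b = 0 := fun b hb => by simp [hρ, hb]
    obtain ⟨blk, hblk⟩ : ∃ blk : (Fin (k + 1) → ℕ → S) → Ordinal.{u},
      blk = fun η => Finset.univ.sup fun l => ρ (η l) := ⟨_, rfl⟩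
    have hle : ∀ η l, ρ (η l) ≤ blk η := by
      intro η l
      rw [hblk]
      exact Finset.le_sup (f := fun l => ρ (η l)) (Finset.mem_univ l)
    have hatt : ∀ η, ∃ l, ρ (η l) = blk η := by
      intro η
      obtain ⟨l, _, hl⟩ := Finset.exists_mem_eq_sup (Finset.univ : Finset (Fin (k + 1)))
        Finset.univ_nonempty (fun l => ρ (η l))
      exact ⟨l, by rw [hblk]; exact hl.symm⟩
    have claim : ∀ β : Ordinal.{u}, ∃ r : (Fin (k + 1) → ℕ → S) → (Fin (k + 1) → ℕ → S) → Prop,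
        WellFounded r ∧
        (∀ x ∈ LS k U w, blk x = β → ∀ y ∈ LS k U w, blk y = β → r x y ∨ x = y ∨ r y x) ∧
        ∀ η ∈ LS k U w, blk η = β → ∃ (m : Fin (k + 1)) (N : ℕ), ∀ n, N ≤ n →
          restrictAt η m n ∉ AS k U w ∧
          ∀ η' ∈ LS k U w, (blk η' < β ∨ blk η' = β ∧ r η' η) →
            ∀ m' n', restrictAt η m n ≠ restrictAt η' m' n' := by
      intro β
      rcases eq_or_ne β 0 with rfl | hβ
      · obtain ⟨r, hwf, htri, hr⟩ := ih U0 w hw (hd.mono_left Set.inter_subset_left)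
          (by omega) hU0card
        have hin : ∀ x ∈ LS k U w, blk x = 0 → x ∈ LS k U0 w := by
          intro x hx hb
          refine ⟨fun l => ?_, hx.2⟩
          rcases hx.1 l with h | h
          · refine Or.inl (hρzero _ h ?_)
            have := hle x l
            rw [hb] at this
            exact le_antisymm this (zero_le)
          · exact Or.inr h
        refine ⟨r, hwf, fun x hx hbx y hy hby => htri x (hin x hx hbx) y (hin y hy hby), ?_⟩
        intro η hη hb
        obtain ⟨m, N, hN⟩ := hr η (hin η hη hb)
        refine ⟨m, N, fun n hn => ⟨fun h => (hN n hn).1 ?_, ?_⟩⟩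
        · exact reflect hd subset_rfl hcl0 (hin η hη hb).1 h
        · rintro η' hη' (h | ⟨h, h'⟩)
          · exact absurd h (not_lt.2 zero_le)
          · exact (hN n hn).2 η' (hin η' hη' h) h'
      · have hβ' : 0 < β := pos_iff_ne_zero.2 hβ
        by_cases hE : ∃ a, ρ a = β
        swap
        · refine ⟨fun _ _ => False, ⟨fun a => ⟨_, fun _ h => h.elim⟩⟩, ?_, ?_⟩
          · intro x hx hb
            obtain ⟨l, hl⟩ := hatt x
            exact absurd ⟨_, hl.trans hb⟩ hE
          · intro x hx hb
            obtain ⟨l, hl⟩ := hatt x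
            exact absurd ⟨_, hl.trans hb⟩ hE
        obtain ⟨a, ha⟩ := hE
        obtain ⟨haU, haU0, hasucc⟩ := hρpos a (ha ▸ hβ')
        have haw : a ∉ w := Set.disjoint_left.1 hd haU
        have huniq : ∀ b, ρ b = β → b = a := by
          intro b hb
          obtain ⟨hbU, _, hbs⟩ := hρpos b (hb ▸ hβ')
          apply hρinj hbU haU
          apply Order.succ_injective
          rw [← hbs, ← hasucc, ha, hb]
        set U' : Set (ℕ → S) := {b | b ∈ U ∧ ρ b < β} with hU'
        have hsub0 : U0 ⊆ U' := fun b hb => ⟨hb.1, by rw [hρ0 b hb]; exact hβ'⟩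
        have hU'card : #U' ≤ Cardinal.aleph (j : Ordinal.{u}) := by
          have hs : U' ⊆ U0 ∪ {y | y ∈ U ∧ ρ0 y < ρ0 a} := by
            rintro b ⟨hbU, hbβ⟩
            by_cases hb0 : b ∈ U0
            · exact Or.inl hb0
            · refine Or.inr ⟨hbU, ?_⟩
              have : ρ b = Order.succ (ρ0 b) := by simp [hρ, hbU, hb0]
              rw [← ha, this, hasucc] at hbβ
              exact Order.succ_lt_succ_iff.1 hbβ
          refine (Cardinal.mk_le_mk_of_subset hs).trans ((Cardinal.mk_union_le _ _).trans ?_)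
          exact Cardinal.add_le_of_le (Cardinal.aleph0_le_aleph _) hU0card (hρc a haU)
        have hd' : Disjoint U' (insert a w) := by
          rw [Set.disjoint_left]
          rintro b ⟨hbU, hbβ⟩ (rfl | hb)
          · exact absurd ha hbβ.ne
          · exact Set.disjoint_left.1 hd hbU hb
        obtain ⟨r, hwf, htri, hr⟩ := ih U' (insert a w) (hw.insert a) hd'
          (by rw [Set.ncard_insert_of_notMem haw hw]; omega) hU'card
        have hin : ∀ x ∈ LS k U w, blk x = β → x ∈ LS k U' (insert a w) := by
          intro x hx hb
          refine ⟨fun l => ?_, ?_⟩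
          · rcases hx.1 l with h | h
            · have := hle x l
              rw [hb] at this
              rcases this.lt_or_eq with h' | h'
              · exact Or.inl ⟨h, h'⟩
              · exact Or.inr (Or.inl (huniq _ h'))
            · exact Or.inr (Or.inr h)
          · rintro θ (rfl | hθ)
            · obtain ⟨l, hl⟩ := hatt x
              exact ⟨l, huniq _ (hl.trans hb)⟩
            · exact hx.2 θ hθ
        refine ⟨r, hwf, fun x hx hbx y hy hby => htri x (hin x hx hbx) y (hin y hy hby), ?_⟩
        intro η hη hb
        obtain ⟨m, N, hN⟩ := hr η (hin η hη hb)
        refine ⟨m, N, fun n hn => ⟨fun h => (hN n hn).1 ?_, ?_⟩⟩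
        · refine reflect hd (Set.subset_insert a w) ?_ (hin η hη hb).1 h
          intro θ hθ n hh
          obtain ⟨b, hb, hb2⟩ := hcl0 θ hθ n hh
          exact ⟨b, hsub0 hb, hb2⟩
        · rintro η' hη' (h | ⟨h, h'⟩)
          · intro m' n' e
            apply (hN n hn).1
            rw [e]
            refine ⟨a, Set.mem_insert _ _, η', m', n', fun l => ?_, rfl⟩
            rcases hη'.1 l with h1 | h1
            · exact Or.inl ⟨h1, (hle η' l).trans_lt h⟩
            · exact Or.inr ⟨Or.inr h1, fun e => haw (e ▸ h1)⟩
          · exact (hN n hn).2 η' (hin η' hη' h) h'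
    choose R hwf htri hR using claim
    refine ⟨fun x y => blk x < blk y ∨ blk x = blk y ∧ R (blk y) x y, ?_, ?_, ?_⟩
    · refine ⟨fun x => ?_⟩
      have key : ∀ β : Ordinal.{u}, ∀ x, blk x = β →
          Acc (fun x y => blk x < blk y ∨ blk x = blk y ∧ R (blk y) x y) x := by
        intro β
        induction β using WellFoundedLT.induction with
        | ind β ihβ =>
          intro x
          induction x using (hwf β).induction with
          | _ x ihx =>
            intro hx
            refine ⟨_, ?_⟩
            rintro y (h | ⟨h, h'⟩)
            · exact ihβ _ (hx ▸ h) y rfl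
            · exact ihx y (hx ▸ h') (h.trans hx)
      exact key _ x rfl
    · intro x hx y hy
      rcases lt_trichotomy (blk x) (blk y) with h | h | h
      · exact Or.inl (Or.inl h)
      · rcases htri (blk y) x hx h y hy rfl with h' | h' | h'
        · exact Or.inl (Or.inr ⟨h, h'⟩)
        · exact Or.inr (Or.inl h')
        · exact Or.inr (Or.inr (Or.inr ⟨h.symm, h ▸ h'⟩))
      · exact Or.inr (Or.inr (Or.inl h))
    · intro η hη
      exact hR (blk η) η hη rfl

end Sh883
namespace Sh883

lemma free_quot {G F ι : Type*} [AddCommGroup G] (A B : AddSubgroup G)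
    (T : ι → G) (hT : ∀ i, T i ∈ B) (φ : G →+ (F →₀ ℚ)) (f : ι → F)
    (hf : Function.Injective f)
    (hφ : ∀ i, φ (T i) = Finsupp.single (f i) 1) (hA : ∀ g ∈ A, φ g = 0)
    (hspan : B ≤ A ⊔ AddSubgroup.closure (Set.range T)) :
    Module.Free ℤ (↥B ⧸ A.addSubgroupOf B) := by
  let v : ι → (↥B ⧸ A.addSubgroupOf B) := fun i => QuotientAddGroup.mk ⟨T i, hT i⟩
  let ψ : (↥B ⧸ A.addSubgroupOf B) →+ (F →₀ ℚ) :=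
    QuotientAddGroup.lift _ (φ.comp B.subtype) (fun g hg => hA _ hg)
  have hψ : ∀ i, ψ (v i) = Finsupp.single (f i) 1 := fun i => hφ i
  have li : LinearIndependent ℤ v := by
    apply LinearIndependent.of_comp ψ.toIntLinearMap
    have h1 : LinearIndependent ℚ (fun i : ι => (Finsupp.single (f i) 1 : F →₀ ℚ)) :=
      (Finsupp.linearIndependent_single_one ℚ F).comp f hf
    have h2 : (ψ.toIntLinearMap ∘ v) = fun i : ι => (Finsupp.single (f i) 1 : F →₀ ℚ) :=
      funext hψ
    rw [h2]
    exact h1.restrict_scalars' ℤ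
  have sp : ⊤ ≤ Submodule.span ℤ (Set.range v) := by
    rintro x -
    obtain ⟨⟨b, hb⟩, rfl⟩ := QuotientAddGroup.mk_surjective x
    obtain ⟨p, hp, q, hq, hpq⟩ := AddSubgroup.mem_sup.1 (hspan hb)
    have hle : AddSubgroup.closure (Set.range T) ≤ B := by
      rw [AddSubgroup.closure_le]
      rintro _ ⟨i, rfl⟩
      exact hT i
    have key : ∀ q (hq : q ∈ AddSubgroup.closure (Set.range T)),
        (QuotientAddGroup.mk (⟨q, hle hq⟩ : B) : ↥B ⧸ A.addSubgroupOf B) ∈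
          Submodule.span ℤ (Set.range v) := by
      intro q hq
      induction hq using AddSubgroup.closure_induction with
      | mem x hx =>
        obtain ⟨i, rfl⟩ := hx
        exact Submodule.subset_span ⟨i, rfl⟩
      | zero => exact Submodule.zero_mem _
      | add x y hx hy h1 h2 => exact Submodule.add_mem _ h1 h2
      | neg x hx h1 => exact Submodule.neg_mem _ h1
    have e : (QuotientAddGroup.mk (⟨b, hb⟩ : B) : ↥B ⧸ A.addSubgroupOf B) =
        QuotientAddGroup.mk (⟨q, hle hq⟩ : B) := by
      rw [eq_comm, QuotientAddGroup.eq]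
      change -q + b ∈ A
      rw [← hpq]
      simpa using hp
    rw [e]
    exact key q hq
  exact Module.Free.of_basis (Module.Basis.mk li sp)

lemma solve {I R M F : Type*} [Fintype M] [DecidableEq M] [AddCommGroup F] (r : I → I → Prop)
    (hr : WellFounded r)
    (c : I → M → R) (m : I → M)
    (hp : ∀ i j m', c i (m i) = c j m' → (i = j ∧ m' = m i) ∨ r i j)
    (w : I → F) (base : R → F) :
    ∃ ξ : R → F, (∀ i, ∑ m', ξ (c i m') = w i) ∧
      ∀ ν, (∀ i, c i (m i) ≠ ν) → ξ ν = base ν := by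
  classical
  have hinj : ∀ i j, c i (m i) = c j (m j) → i = j := by
    intro i j h
    rcases hp i j _ h with h1 | h1
    · exact h1.1
    rcases hp j i _ h.symm with h2 | h2
    · exact h2.1.symm
    exact absurd h2 (hr.asymmetric _ _ h1)
  let V : I → F := hr.fix fun i rec =>
    w i - ∑ m' ∈ Finset.univ.erase (m i),
      if h : ∃ j, c j (m j) = c i m' ∧ r j i then rec h.choose h.choose_spec.2
      else base (c i m')
  have hV : ∀ i, V i = w i - ∑ m' ∈ Finset.univ.erase (m i),
      if h : ∃ j, c j (m j) = c i m' ∧ r j i then V h.choose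
      else base (c i m') := fun i => hr.fix_eq _ i
  let ξ : R → F := fun ν => if h : ∃ j, c j (m j) = ν then V h.choose else base ν
  have hξ : ∀ i, ξ (c i (m i)) = V i := by
    intro i
    have h : ∃ j, c j (m j) = c i (m i) := ⟨i, rfl⟩
    simp only [ξ, dif_pos h]
    rw [hinj _ _ h.choose_spec]
  refine ⟨ξ, fun i => ?_, fun ν hν => ?_⟩
  · rw [← Finset.add_sum_erase _ _ (Finset.mem_univ (m i)), hξ, hV]
    have : ∀ m' ∈ Finset.univ.erase (m i), ξ (c i m') =
        if h : ∃ j, c j (m j) = c i m' ∧ r j i then V h.choose else base (c i m') := by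
      intro m' hm'
      by_cases h : ∃ j, c j (m j) = c i m' ∧ r j i
      · rw [dif_pos h]
        conv_lhs => rw [← h.choose_spec.1]
        rw [hξ]
      · rw [dif_neg h]
        have h' : ¬ ∃ j, c j (m j) = c i m' := by
          rintro ⟨j, hj⟩
          rcases hp j i _ hj with h1 | h1
          · obtain ⟨rfl, h2⟩ := h1
            exact Finset.ne_of_mem_erase hm' h2
          · exact h ⟨j, hj, h1⟩
        simp only [ξ, dif_neg h']
    rw [Finset.sum_congr rfl this]
    abel
  · have h' : ¬ ∃ j, c j (m j) = ν := by
      rintro ⟨j, hj⟩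
      exact hν j hj
    simp only [ξ, dif_neg h']

lemma down {F : Type*} [AddCommGroup F] (w : ℕ → F) (N : ℕ) : ∀ e : ℕ → F,
    (∀ n, N ≤ n → (n.factorial : ℤ) • e (n + 1) = e n + w n) →
    ∃ y : ℕ → F, (∀ n, N ≤ n → y n = e n) ∧
      ∀ n, (n.factorial : ℤ) • y (n + 1) = y n + w n := by
  induction N with
  | zero => exact fun e he => ⟨e, fun _ _ => rfl, fun n => he n (Nat.zero_le _)⟩
  | succ N ih =>
    intro e he
    obtain ⟨y, h1, h2⟩ := ih (Function.update e N ((N.factorial : ℤ) • e (N + 1) - w N)) (by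
      intro n hn
      rcases hn.lt_or_eq with h | rfl
      · rw [Function.update_of_ne (by omega), Function.update_of_ne (by omega)]
        exact he n h
      · simp)
    exact ⟨y, fun n hn => by rw [h1 n (by omega), Function.update_of_ne (by omega)], h2⟩

lemma up {F : Type*} [AddCommGroup F] [Module ℚ F] (w : ℕ → F) :
    ∃ y : ℕ → F, (∀ n, (n.factorial : ℤ) • y (n + 1) = y n + w n) ∧
      ((∀ n, w n = 0) → ∀ n, y n = 0) := by
  let y : ℕ → F := fun n => Nat.rec 0 (fun n yn => ((n.factorial : ℚ)⁻¹) • (yn + w n)) n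
  have hy : ∀ n, y (n + 1) = ((n.factorial : ℚ)⁻¹) • (y n + w n) := fun n => rfl
  refine ⟨y, fun n => ?_, fun h n => ?_⟩
  · rw [hy, ← Int.cast_smul_eq_zsmul ℚ, smul_smul]
    have : (n.factorial : ℚ) ≠ 0 := by exact_mod_cast n.factorial_ne_zero
    simp [this]
  · induction n with
    | zero => rfl
    | succ n ih => rw [hy, ih, h n]; simp

lemma rel_eq {k : ℕ} {S : Type u} {Λ : Set (Fin (k + 1) → ℕ → S)} (a : ↥Λ → ℕ → ℤ)
    (η : ↥Λ) (n : ℕ) : (n.factorial : ℤ) • yg a η (n + 1) - yg a η n - a η n • zg a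
      - ∑ m : Fin (k + 1), xg a (resMem η m n) = 0 := by
  have h : (QuotientAddGroup.mk' (relSub a)) (relEl a η n) = 0 := by
    rw [QuotientAddGroup.mk'_apply, QuotientAddGroup.eq_zero_iff]
    exact AddSubgroup.subset_closure ⟨η, n, rfl⟩
  rw [relEl, map_sub, map_sub, map_sub, map_zsmul, map_zsmul, map_sum] at h
  exact h

/-- homomorphisms out of `Gx` -/
lemma exists_hom {k : ℕ} {S : Type u} {Λ : Set (Fin (k + 1) → ℕ → S)} (a : ↥Λ → ℕ → ℤ)
    {F : Type*} [AddCommGroup F] (ξ : ↥(LambdaRes Λ) → F) (y : ↥Λ → ℕ → F) (ζ : F)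
    (h : ∀ η n, (n.factorial : ℤ) • y η (n + 1) = y η n + (a η n • ζ +
      ∑ m : Fin (k + 1), ξ (resMem η m n))) :
    ∃ φ : Gx a →+ F, (∀ ν, φ (xg a ν) = ξ ν) ∧ (∀ η n, φ (yg a η n) = y η n) ∧
      φ (zg a) = ζ := by
  let f : Gen k S Λ → F := fun g => match g with
    | Gen.X ν => ξ ν
    | Gen.Y η n => y η n
    | Gen.Z => ζ
  have hle : relSub a ≤ (FreeAbelianGroup.lift f).ker := by
    rw [relSub, AddSubgroup.closure_le]
    rintro _ ⟨η, n, rfl⟩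
    change FreeAbelianGroup.lift f _ = 0
    rw [relEl, map_sub, map_sub, map_sub, map_zsmul, map_zsmul, map_sum]
    simp only [FreeAbelianGroup.lift_apply_of, f]
    rw [h]
    abel
  refine ⟨QuotientAddGroup.lift _ (FreeAbelianGroup.lift f) hle, fun ν => ?_, fun η n => ?_, ?_⟩
  · change FreeAbelianGroup.lift f (FreeAbelianGroup.of _) = _
    simp [f]
  · change FreeAbelianGroup.lift f (FreeAbelianGroup.of _) = _
    simp [f]
  · change FreeAbelianGroup.lift f (FreeAbelianGroup.of _) = _
    simp [f]

end Sh883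
namespace Sh883

lemma free_of_good {k : ℕ} {S : Type u} (Λ : Set (Fin (k + 1) → ℕ → S)) (a : ↥Λ → ℕ → ℤ)
    (U w : Set (ℕ → S)) (hd : Disjoint U w) (hgood : Good k U w) :
    Module.Free ℤ (↥(GU a (U ∪ w)) ⧸ (GUu a U w).addSubgroupOf (GU a (U ∪ w))) := by
  classical
  obtain ⟨r, hwf, htri, hex⟩ := hgood
  choose! m N hmN using hex
  let I := {i : ↥Λ × ℕ // i.1.1 ∈ LS k U w ∧ N i.1.1 ≤ i.2}
  let c : I → Fin (k + 1) → ↥(LambdaRes Λ) := fun i m' => resMem i.1.1 m' i.1.2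
  let mm : I → Fin (k + 1) := fun i => m i.1.1.1
  let R : I → I → Prop := fun i j => r i.1.1.1 j.1.1.1
  have hR : WellFounded R := InvImage.wf (fun i : I => i.1.1.1) hwf
  have hp : ∀ i j m', c i (mm i) = c j m' → (i = j ∧ m' = mm i) ∨ R i j := by
    intro i j m' h
    have h' : restrictAt i.1.1.1 (mm i) i.1.2 = restrictAt j.1.1.1 m' j.1.2 :=
      congrArg Subtype.val h
    obtain ⟨e1, e2, -, -⟩ := restrictAt_inj h'
    rcases htri _ i.2.1 _ j.2.1 with h1 | h1 | h1
    · exact Or.inr h1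
    · refine Or.inl ⟨?_, e1.symm⟩
      exact Subtype.ext (Prod.ext (Subtype.ext h1) e2)
    · exact absurd h' ((hmN _ i.2.1 i.1.2 i.2.2).2 _ j.2.1 h1 _ _)
  -- the values
  let F := Gen k S Λ →₀ ℚ
  let e : Gen k S Λ → F := fun g => Finsupp.single g 1
  let ζ : F := if w = ∅ then e Gen.Z else 0
  let base : ↥(LambdaRes Λ) → F := fun ν => if ν.1 ∈ AS k U w then 0 else e (Gen.X ν)
  obtain ⟨ξ, hξ1, hξ2⟩ := solve R hR c mm hp
    (fun i => (i.1.2.factorial : ℤ) • e (Gen.Y i.1.1 (i.1.2 + 1)) - e (Gen.Y i.1.1 i.1.2)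
      - a i.1.1 i.1.2 • ζ) base
  have hξA : ∀ ν : ↥(LambdaRes Λ), ν.1 ∈ AS k U w → ξ ν = 0 := by
    intro ν hν
    rw [hξ2 ν]
    · simp [base, hν]
    · rintro i rfl
      exact (hmN _ i.2.1 i.1.2 i.2.2).1 hν
  have hy : ∀ η : ↥Λ, ∃ y : ℕ → F, (∀ n, (n.factorial : ℤ) • y (n + 1) = y n + (a η n • ζ +
      ∑ m : Fin (k + 1), ξ (resMem η m n))) ∧
      (η.1 ∈ LS k U w → ∀ n, N η.1 ≤ n → y n = e (Gen.Y η n)) ∧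
      (η.1 ∉ LS k U w → (∀ n, (a η n • ζ + ∑ m : Fin (k + 1), ξ (resMem η m n)) = 0) →
        ∀ n, y n = 0) := by
    intro η
    by_cases hη : η.1 ∈ LS k U w
    · obtain ⟨y, h1, h2⟩ := down (fun n => a η n • ζ + ∑ m : Fin (k + 1), ξ (resMem η m n))
        (N η.1) (fun n => e (Gen.Y η n)) (by
          intro n hn
          have := hξ1 ⟨(η, n), hη, hn⟩
          simp only [c] at this
          rw [this]
          abel)
      exact ⟨y, h2, fun _ => h1, fun h => absurd hη h⟩
    · obtain ⟨y, h1, h2⟩ := up (fun n => a η n • ζ + ∑ m : Fin (k + 1), ξ (resMem η m n))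
      exact ⟨y, h1, fun h => absurd h hη, fun _ => h2⟩
  choose y hy1 hy2 hy3 using hy
  obtain ⟨φ, hφx, hφy, hφz⟩ := exists_hom a ξ y ζ hy1
  -- the basis
  let T : Set (Gen k S Λ) := {g | match g with
    | Gen.X ν => ν.1 ∈ XS k (U ∪ w) ∧ ν.1 ∉ AS k U w ∧ ∀ i, c i (mm i) ≠ ν
    | Gen.Y η n => η.1 ∈ LS k U w ∧ N η.1 ≤ n
    | Gen.Z => w = ∅}
  let g : Gen k S Λ → Gx a := fun x => QuotientAddGroup.mk (FreeAbelianGroup.of x)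
  have hzB : ∀ V : Set (ℕ → S), zg a ∈ GU a V := fun V =>
    AddSubgroup.subset_closure (Or.inl (Or.inl rfl))
  have hyB : ∀ (V : Set (ℕ → S)) (η : ↥Λ) n, (∀ l, η.1 l ∈ V) → yg a η n ∈ GU a V :=
    fun V η n h => AddSubgroup.subset_closure (Or.inl (Or.inr ⟨η, n, h, rfl⟩))
  have hxB : ∀ (V : Set (ℕ → S)) (ν : ↥(LambdaRes Λ)), ν.1 ∈ XS k V → xg a ν ∈ GU a V := by
    rintro V ν ⟨η, m, n, h1, h2⟩
    exact AddSubgroup.subset_closure (Or.inr ⟨η, m, n, ν, h1, h2, rfl⟩)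
  have hAle : ∀ θ ∈ w, GU a (U ∪ (w \ {θ})) ≤ GUu a U w := fun θ hθ =>
    le_iSup₂ (f := fun θ (_ : θ ∈ w) => GU a (U ∪ (w \ {θ}))) θ hθ
  have hnotL : ∀ (η : Fin (k + 1) → ℕ → S), ∀ θ ∈ w, (∀ l, η l ∈ U ∪ (w \ {θ})) →
      η ∉ LS k U w := by
    intro η θ hθ h hL
    obtain ⟨l, hl⟩ := hL.2 θ hθ
    have := h l
    rw [hl] at this
    rcases this with h | h
    · exact Set.disjoint_left.1 hd h hθ
    · exact h.2 rfl
  refine free_quot (GUu a U w) (GU a (U ∪ w)) (fun t : T => g t.1) ?_ φ (fun t : T => t.1)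
    Subtype.val_injective ?_ ?_ ?_
  · rintro ⟨ν | ⟨η, n⟩ | _, ht⟩
    · exact hxB _ ν ht.1
    · exact hyB _ η n ht.1.1
    · exact hzB _
  · rintro ⟨ν | ⟨η, n⟩ | _, ht⟩
    · refine (hφx ν).trans ?_
      rw [hξ2 ν ht.2.2]
      simp only [base, if_neg ht.2.1]
      rfl
    · exact (hφy η n).trans (hy2 η ht.1 n ht.2)
    · refine hφz.trans ?_
      simp only [ζ, if_pos (show w = ∅ from ht)]
      rfl
  · suffices GUu a U w ≤ φ.ker from fun x hx => this hx
    refine iSup₂_le fun θ hθ => ?_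
    have hζ : ζ = 0 := if_neg (Set.nonempty_iff_ne_empty.1 ⟨θ, hθ⟩)
    rw [GU, AddSubgroup.closure_le]
    rintro x ((hx | ⟨η, n, h, rfl⟩) | ⟨η, m, n, ν, h, hν, rfl⟩)
    · rw [Set.mem_singleton_iff] at hx
      subst hx
      exact hφz.trans hζ
    · refine (hφy η n).trans (hy3 η (hnotL _ θ hθ h) (fun n => ?_) n)
      rw [hζ, smul_zero, zero_add]
      exact Finset.sum_eq_zero fun m _ => hξA _ ⟨θ, hθ, η.1, m, n, h, rfl⟩
    · exact (hφx ν).trans (hξA _ ⟨θ, hθ, η, m, n, h, hν⟩)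
  · set H := GUu a U w ⊔ AddSubgroup.closure (Set.range fun t : T => g t.1) with hH
    have hHA : GUu a U w ≤ H := le_sup_left
    have hHT : ∀ t ∈ T, g t ∈ H := fun t ht =>
      (le_sup_right : _ ≤ H) (AddSubgroup.subset_closure ⟨⟨t, ht⟩, rfl⟩)
    have hHz : zg a ∈ H := by
      rcases w.eq_empty_or_nonempty with h | ⟨θ, hθ⟩
      · exact hHT Gen.Z h
      · exact hHA (hAle θ hθ (hzB _))
    have hHy : ∀ η : ↥Λ, η.1 ∈ LS k U w → ∀ n, N η.1 ≤ n → yg a η n ∈ H :=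
      fun η hη n hn => hHT (Gen.Y η n) ⟨hη, hn⟩
    have hnp : ∀ ν : ↥(LambdaRes Λ), ν.1 ∈ XS k (U ∪ w) → (∀ i, c i (mm i) ≠ ν) →
        xg a ν ∈ H := by
      intro ν hν hi
      by_cases hA : ν.1 ∈ AS k U w
      · obtain ⟨θ, hθ, h⟩ := hA
        exact hHA (hAle θ hθ (hxB _ ν h))
      · exact hHT (Gen.X ν) ⟨hν, hA, hi⟩
    have hpiv : ∀ i : I, xg a (c i (mm i)) ∈ H := by
      intro i
      induction i using hR.induction with
      | _ i ih =>
        have hrel := rel_eq a i.1.1 i.1.2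
        rw [← Finset.add_sum_erase _ _ (Finset.mem_univ (mm i))] at hrel
        have e : xg a (c i (mm i)) = (i.1.2.factorial : ℤ) • yg a i.1.1 (i.1.2 + 1)
            - yg a i.1.1 i.1.2 - a i.1.1 i.1.2 • zg a
            - ∑ m' ∈ Finset.univ.erase (mm i), xg a (c i m') := by
          rw [← sub_eq_zero, ← neg_eq_zero, ← hrel]
          simp only [c]
          abel
        rw [e]
        refine H.sub_mem (H.sub_mem (H.sub_mem (H.zsmul_mem (hHy _ i.2.1 _ ?_) _)
          (hHy _ i.2.1 _ i.2.2)) (H.zsmul_mem hHz _)) (H.sum_mem fun m' hm' => ?_)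
        · exact i.2.2.trans (Nat.le_succ _)
        · by_cases hj : ∃ j, c j (mm j) = c i m'
          · obtain ⟨j, hj⟩ := hj
            rcases hp j i m' hj with h | h
            · obtain ⟨rfl, h⟩ := h
              exact absurd h (Finset.ne_of_mem_erase hm')
            · rw [← hj]
              exact ih j h
          · push Not at hj
            exact hnp _ ⟨i.1.1.1, m', i.1.2, i.2.1.1, rfl⟩ hj
    have hHx : ∀ ν : ↥(LambdaRes Λ), ν.1 ∈ XS k (U ∪ w) → xg a ν ∈ H := by
      intro ν hν
      by_cases hj : ∃ j, c j (mm j) = ν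
      · obtain ⟨j, rfl⟩ := hj
        exact hpiv j
      · push Not at hj
        exact hnp ν hν hj
    rw [GU, AddSubgroup.closure_le]
    rintro x ((hx | ⟨η, n, h, rfl⟩) | ⟨η, m, n, ν, h, hν, rfl⟩)
    · rw [Set.mem_singleton_iff] at hx
      subst hx
      exact hHz
    · by_cases hη : η.1 ∈ LS k U w
      · have hstep : ∀ n, yg a η (n + 1) ∈ H → yg a η n ∈ H := by
          intro n hn
          have hrel := rel_eq a η n
          have e : yg a η n = (n.factorial : ℤ) • yg a η (n + 1) - a η n • zg a
              - ∑ m' : Fin (k + 1), xg a (resMem η m' n) := by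
            rw [← sub_eq_zero, ← neg_eq_zero, ← hrel]
            abel
          rw [e]
          exact H.sub_mem (H.sub_mem (H.zsmul_mem hn _) (H.zsmul_mem hHz _))
            (H.sum_mem fun m' _ => hHx _ ⟨η.1, m', n, h, rfl⟩)
        have hall : ∀ d n, N η.1 ≤ n + d → yg a η n ∈ H := by
          intro d
          induction d with
          | zero => exact fun n hn => hHy η hη n hn
          | succ d ih => exact fun n hn => hstep n (ih (n + 1) (by omega))
        exact hall (N η.1) n (by omega)
      · have : ∃ θ ∈ w, ∀ l, η.1 l ≠ θ := by
          by_contra! hcon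
          exact hη ⟨h, hcon⟩
        obtain ⟨θ, hθ, hne⟩ := this
        refine hHA (hAle θ hθ (hyB _ η n fun l => ?_))
        rcases h l with h1 | h1
        · exact Or.inl h1
        · exact Or.inr ⟨h1, hne l⟩
    · exact hHx ν ⟨η, m, n, h, hν⟩

lemma GU_mono {k : ℕ} {S : Type u} {Λ : Set (Fin (k + 1) → ℕ → S)} (a : ↥Λ → ℕ → ℤ)
    {V W : Set (ℕ → S)} (h : V ⊆ W) : GU a V ≤ GU a W := by
  apply AddSubgroup.closure_mono
  rintro x ((hx | ⟨η, n, h', rfl⟩) | ⟨η, m, n, ν, h', hν, rfl⟩)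
  · exact Or.inl (Or.inl hx)
  · exact Or.inl (Or.inr ⟨η, n, fun l => h (h' l), rfl⟩)
  · exact Or.inr ⟨η, m, n, ν, fun l => h (h' l), hν, rfl⟩

end Sh883

open Sh883 in
/-- Let `x = (S, Λ, a)` be an abelian-group `k*`-parameter, `U` a set of
functions `ℕ → S`, and `u` a finite set of functions `ℕ → S` disjoint from `U`.  If
`|u| ≤ k ≤ k*` and `|U| ≤ ℵ_{k*−k}`, then `G_{U,u}` is a subgroup of `G_{U∪u}` and the
quotient `G_{U∪u}/G_{U,u}` is a free abelian group. -/
theorem stmt5 {kst : ℕ} {S : Type u} (Λ : Set (Fin (kst + 1) → ℕ → S)) (a : ↥Λ → ℕ → ℤ)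
    (U u : Set (ℕ → S)) (hufin : u.Finite) (hdisj : Disjoint U u)
    (k : ℕ) (hk : k ≤ kst) (hu : u.ncard ≤ k) (hU : #U ≤ Cardinal.aleph (kst - k)) :
    GUu a U u ≤ GU a (U ∪ u) ∧
      Module.Free ℤ (↥(GU a (U ∪ u)) ⧸ (GUu a U u).addSubgroupOf (GU a (U ∪ u))) := by
  refine ⟨iSup₂_le fun θ _ => GU_mono a (Set.union_subset_union_right _ Set.diff_subset), ?_⟩
  refine free_of_good Λ a U u hdisj (good_all (kst - k) U u hufin hdisj (by omega) ?_)
  rw [Ordinal.natCast_sub]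
  exact hU
end
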